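/- arXiv:math/0203180 — 2 statements merged into one kernel-verified Lean document; each statement's English description precedes it below -/
import Mathlib

section
/- Let t ≥ 2 and let p_1, …, p_t ∈ k be algebraically independent over the prime subfield of k (in particular each p_i is nonzero and not equal to 1). Then the k-subalgebra of End_k(k[Y,Y⁻¹]) generated by the Eulerian derivatives D_{p_1}, …, D_{p_t} is a noetherian ring (both left and right noetherian). -/
set_option synthInstance.maxHeartbeats 1000000
set_option maxHeartbeats 4000000
set_option maxSynthPendingDepth 3

noncomputable section

/-!
Write `p^n` for the point `(p₁ⁿ, …, p_tⁿ)`. An element of degree `d` of the algebra sends `T n` to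
`f(p^n) T (n - d)`, where the symbol `f` is a polynomial of degree at most `d` vanishing at
`p^0, …, p^(d-1)`; up to a nonzero scalar, left multiplication by `D i` multiplies the symbol by
`X i - p_i^d`. The leading symbols of a left ideal therefore form spaces `J d` with
`L d * J d ≤ J (d + 1)`, where `L d` is spanned by the affine linear forms vanishing at `p^d`, and
finite generation reduces to the equality `J (d + 1) = L d * J d` for large `d`.

Hilbert's basis theorem for the Rees algebra of the degree filtration gives finitely many `g i` in
`J (d i)` whose combinations exhaust `J`, without any vanishing condition on the coefficients.
Algebraic independence makes every nonzero polynomial vanish at only finitely many `p^n`, so some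
`g a` vanishes at no `p^n` with `n ≥ N`, and Koszul relations with `g a` make it possible to require
that the coefficients vanish at `p^N, …, p^(e-1)`. Let `Y e` be the space of combinations with such
coefficients and `l e` one of the coordinate forms in `L e`. Then
`Y (e + 1) ≤ l e * Y e + L e * J e`, so the dimension of `Y e / J e` is eventually constant,
multiplication by `l e` is eventually injective on it, and this gives `J (e + 1) ≤ L e * J e`.

Right ideals are handled in the same way, with the points `p^(-n-1)`.
-/

open Finset MvPolynomial Submodule

namespace NoetherianEulerian

section DegreeFiltration

variable {σ k : Type*} [CommRing k]

lemma restrictTotalDegree_zero_le : restrictTotalDegree σ k 0 ≤ 1 := fun f hf => by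
  rw [mem_restrictTotalDegree, Nat.le_zero, totalDegree_eq_zero_iff_eq_C] at hf
  exact mem_one.2 ⟨_, hf.symm⟩

lemma restrictTotalDegree_mono : Monotone (restrictTotalDegree σ k) := fun _ _ h =>
  restrictSupport_mono _ fun _ hm => le_trans hm h

lemma span_singleton_mul_le_iff {g : MvPolynomial σ k} {M N : Submodule k (MvPolynomial σ k)} :
    span k {g} * M ≤ N ↔ ∀ f ∈ M, g * f ∈ N := by
  simp [SetLike.le_def, mem_span_singleton_mul]

lemma restrictTotalDegree_succ_le (n : ℕ) :
    restrictTotalDegree σ k (n + 1) ≤ 1 ⊔ ⨆ i, span k {X i} * restrictTotalDegree σ k n := by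
  classical
  nth_rw 1 [restrictTotalDegree, restrictSupport_eq_span]
  rw [span_le]
  rintro _ ⟨m, hm, rfl⟩
  obtain rfl | hm0 := eq_or_ne m 0
  · exact mem_sup_left (Submodule.one_le.1 le_rfl)
  obtain ⟨i, hi⟩ := Finsupp.support_nonempty_iff.2 hm0
  obtain ⟨m, rfl⟩ := exists_add_of_le (Finsupp.single_le_iff.2
    (Nat.one_le_iff_ne_zero.2 (Finsupp.mem_support_iff.1 hi)))
  refine mem_sup_right (mem_iSup_of_mem i (mem_span_singleton_mul.2 ⟨monomial m 1, ?_, ?_⟩))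
  · rw [mem_restrictTotalDegree]
    refine (totalDegree_monomial_le _ _).trans ?_
    have hm_deg : ((Finsupp.single i 1 + m).sum fun _ e => e) ≤ n + 1 := hm
    rw [Finsupp.sum_add_index' (fun _ => rfl) (fun _ _ _ => rfl), Finsupp.sum_single_index rfl,
      add_comm] at hm_deg
    exact Nat.le_of_add_le_add_right hm_deg
  · simp only [monomial_single_add, pow_one]

/-- The affine linear forms vanishing at the point `x`. -/
def linearFormsAt (x : σ → k) : Submodule k (MvPolynomial σ k) :=
  ⨆ i, span k {X i - C (x i)}

lemma linearFormsAt_mul_le_iff {x : σ → k} {M N : Submodule k (MvPolynomial σ k)} :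
    linearFormsAt x * M ≤ N ↔ ∀ i, ∀ f ∈ M, (X i - C (x i)) * f ∈ N := by
  simp only [linearFormsAt, iSup_mul, iSup_le_iff, span_singleton_mul_le_iff]

lemma restrictTotalDegree_le_one_sup_linearFormsAt_mul (x : σ → k) (n : ℕ) :
    restrictTotalDegree σ k n ≤ 1 ⊔ linearFormsAt x * restrictTotalDegree σ k (n - 1) := by
  induction n with
  | zero => exact restrictTotalDegree_zero_le.trans le_sup_left
  | succ n ih =>
    have h_mono : linearFormsAt x * restrictTotalDegree σ k (n - 1) ≤
        linearFormsAt x * restrictTotalDegree σ k n :=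
      mul_le_mul_right (restrictTotalDegree_mono (n.sub_le 1)) _
    refine (restrictTotalDegree_succ_le n).trans (sup_le le_sup_left (iSup_le fun i => ?_))
    refine span_singleton_mul_le_iff.2 fun f hf => ?_
    have h_split : X i * f = (X i - C (x i)) * f + x i • f := by
      rw [smul_eq_C_mul]
      ring
    rw [h_split]
    exact add_mem (mem_sup_right (linearFormsAt_mul_le_iff.1 le_rfl i f hf))
      (smul_mem _ _ (sup_le_sup_left h_mono _ (ih hf)))

lemma totalDegree_X_sub_C_le [Nontrivial k] (i : σ) (c : k) : (X i - C c).totalDegree ≤ 1 :=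
  (totalDegree_sub_C_le _ _).trans (totalDegree_X i).le

end DegreeFiltration

section Interpolation

variable {σ ι k : Type*} [Field k]

/-- The polynomials of total degree at most `n` vanishing at the points `q j`, `j ∈ s`. -/
def vanishingSubmodule (q : ι → σ → k) (s : Finset ι) (n : ℕ) : Submodule k (MvPolynomial σ k) :=
  restrictTotalDegree σ k n ⊓ (vanishingIdeal k (q '' s)).restrictScalars k

lemma mem_vanishingSubmodule {q : ι → σ → k} {s : Finset ι} {n : ℕ} {f : MvPolynomial σ k} :
    f ∈ vanishingSubmodule q s n ↔ f.totalDegree ≤ n ∧ ∀ j ∈ s, eval (q j) f = 0 := by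
  simp [vanishingSubmodule, mem_restrictTotalDegree, aeval_eq_eval]

lemma vanishingSubmodule_empty (q : ι → σ → k) (n : ℕ) :
    vanishingSubmodule q ∅ n = restrictTotalDegree σ k n := by
  ext f
  simp [mem_vanishingSubmodule, mem_restrictTotalDegree]

lemma mul_mem_vanishingSubmodule_left {q : ι → σ → k} {s : Finset ι} {m n e : ℕ}
    {f g : MvPolynomial σ k} (hg : g.totalDegree ≤ m) (hf : f ∈ vanishingSubmodule q s n)
    (h : m + n ≤ e) : g * f ∈ vanishingSubmodule q s e := by
  rw [mem_vanishingSubmodule] at hf ⊢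
  exact ⟨(totalDegree_mul g f).trans (by omega), fun j hj => by rw [map_mul, hf.2 j hj, mul_zero]⟩

lemma exists_totalDegree_le_eval_eq {q : ι → σ → k} {i₀ : σ} {s : Finset ι}
    (hq : Set.InjOn (fun j => q j i₀) s) (c : ι → k) :
    ∃ f : MvPolynomial σ k, f.totalDegree ≤ #s - 1 ∧ ∀ j ∈ s, eval (q j) f = c j := by
  classical
  refine ⟨(Lagrange.interpolate s (fun j => q j i₀) c).toMvPolynomial i₀, ?_, fun j hj => ?_⟩
  · rw [Polynomial.toMvPolynomial, Polynomial.aeval_eq_sum_range]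
    refine totalDegree_finsetSum_le fun n hn => (totalDegree_smul_le _ _).trans ?_
    rw [totalDegree_X_pow]
    exact (Nat.lt_succ_iff.1 (mem_range.1 hn)).trans
      (Polynomial.natDegree_le_of_degree_le (Lagrange.degree_interpolate_le c hq))
  · rw [eval_toMvPolynomial, Lagrange.eval_interpolate_at_node c hq hj]

lemma linearFormsAt_mul_vanishingSubmodule_le [DecidableEq ι] (q : ι → σ → k) (s : Finset ι)
    (c : ι) (n : ℕ) :
    linearFormsAt (q c) * vanishingSubmodule q s n ≤ vanishingSubmodule q (insert c s) (n + 1) := by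
  refine linearFormsAt_mul_le_iff.2 fun i f hf => ?_
  obtain ⟨hf_deg, hf_eval⟩ := mem_vanishingSubmodule.1 hf
  refine mem_vanishingSubmodule.2 ⟨?_, forall_mem_insert .. |>.2 ⟨by simp, fun j hj => ?_⟩⟩
  · have := totalDegree_mul (X i - C (q c i)) f
    have := totalDegree_X_sub_C_le i (q c i)
    omega
  · rw [map_mul, hf_eval j hj, mul_zero]

-- The Koszul relation `f * (b * g) = g * (f * b)`, where `b` interpolates `h / g` on `s`, replaces
-- the coefficient `h` of `f` by `h - b * g`.
lemma span_singleton_mul_restrictTotalDegree_le {q : ι → σ → k} {i₀ : σ} {s : Finset ι}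
    (hs : s.Nonempty) (hq : Set.InjOn (fun j => q j i₀) s) {f g : MvPolynomial σ k} {m n e : ℕ}
    (hf : f.totalDegree ≤ m) (hg : g.totalDegree ≤ n) (hgs : ∀ j ∈ s, eval (q j) g ≠ 0)
    (he : #s + m + n ≤ e + 1) :
    span k {f} * restrictTotalDegree σ k (e - m) ≤
      span k {f} * vanishingSubmodule q s (e - m) ⊔
        span k {g} * restrictTotalDegree σ k (e - n) := by
  have hs_pos := hs.card_pos
  refine span_singleton_mul_le_iff.2 fun h hh => ?_
  rw [mem_restrictTotalDegree] at hh
  obtain ⟨b, hb_deg, hb⟩ := exists_totalDegree_le_eval_eq hq fun j => eval (q j) h / eval (q j) g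
  have h_rem : h - b * g ∈ vanishingSubmodule q s (e - m) := by
    refine mem_vanishingSubmodule.2 ⟨(totalDegree_sub _ _).trans (max_le hh ?_), fun j hj => ?_⟩
    · have := totalDegree_mul b g
      omega
    · rw [map_sub, map_mul, hb j hj, div_mul_cancel₀ _ (hgs j hj), sub_self]
  have h_coeff : f * b ∈ restrictTotalDegree σ k (e - n) := by
    have := totalDegree_mul f b
    rw [mem_restrictTotalDegree]
    omega
  have h_split : f * h = f * (h - b * g) + g * (f * b) := by ring
  rw [h_split]
  exact add_mem_sup (mem_span_singleton_mul.2 ⟨_, h_rem, rfl⟩)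
    (mem_span_singleton_mul.2 ⟨_, h_coeff, rfl⟩)

lemma vanishingSubmodule_inf_iSup_le {τ : Type*} {q : ι → σ → k} {i₀ : σ} {s : Finset ι}
    (hq : Set.InjOn (fun j => q j i₀) s) {g : τ → MvPolynomial σ k} {d : τ → ℕ}
    (hg : ∀ i, (g i).totalDegree ≤ d i) {a : τ} (ha : ∀ j ∈ s, eval (q j) (g a) ≠ 0) {e : ℕ}
    (he : ∀ i, #s + d i + d a ≤ e + 1) :
    vanishingSubmodule q s e ⊓ ⨆ i, span k {g i} * restrictTotalDegree σ k (e - d i) ≤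
      ⨆ i, span k {g i} * vanishingSubmodule q s (e - d i) := by
  obtain rfl | hs := s.eq_empty_or_nonempty
  · simp only [vanishingSubmodule_empty, inf_le_right]
  have h_le_iSup := le_iSup fun i => span k {g i} * vanishingSubmodule q s (e - d i)
  have h_reduce : ⨆ i, span k {g i} * restrictTotalDegree σ k (e - d i) ≤
      (⨆ i, span k {g i} * vanishingSubmodule q s (e - d i)) ⊔
        span k {g a} * restrictTotalDegree σ k (e - d a) :=
    iSup_le fun i => (span_singleton_mul_restrictTotalDegree_le hs hq (hg i) (hg a) ha
      (he i)).trans (sup_le_sup_right (h_le_iSup i) _)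
  have h_vanish : ⨆ i, span k {g i} * vanishingSubmodule q s (e - d i) ≤
      vanishingSubmodule q s e :=
    iSup_le fun i => span_singleton_mul_le_iff.2 fun f hf =>
      mul_mem_vanishingSubmodule_left (hg i) hf (by have := he i; have := hs.card_pos; omega)
  rintro f ⟨hf, hf_comb⟩
  obtain ⟨y, hy, _, hz, rfl⟩ := mem_sup.1 (h_reduce hf_comb)
  obtain ⟨h, hh, rfl⟩ := mem_span_singleton_mul.1 hz
  have h_prod : g a * h ∈ vanishingSubmodule q s e :=
    ((vanishingSubmodule q s e).add_mem_iff_right (h_vanish hy)).1 hf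
  refine add_mem hy (mem_iSup_of_mem a (mem_span_singleton_mul.2 ⟨h, ?_, rfl⟩))
  refine mem_vanishingSubmodule.2 ⟨(mem_restrictTotalDegree _ _ _).1 hh, fun j hj => ?_⟩
  have h_eval := (mem_vanishingSubmodule.1 h_prod).2 j hj
  rw [map_mul] at h_eval
  exact (mul_eq_zero.1 h_eval).resolve_left (ha j hj)

lemma vanishingSubmodule_insert_succ_le [DecidableEq ι] {q : ι → σ → k} {i₀ : σ}
    (hq : Function.Injective fun j => q j i₀) {s : Finset ι} {n : ℕ} (hs : #s ≤ n) {c : ι}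
    (hc : c ∉ s) :
    vanishingSubmodule q (insert c s) (n + 1) ≤ linearFormsAt (q c) * vanishingSubmodule q s n := by
  have h_vanish := linearFormsAt_mul_vanishingSubmodule_le q ∅ c n
  rw [vanishingSubmodule_empty, insert_empty_eq] at h_vanish
  intro f hf
  obtain ⟨hf_deg, hf_eval⟩ := mem_vanishingSubmodule.1 hf
  have hf_forms : f ∈ linearFormsAt (q c) * restrictTotalDegree σ k n := by
    obtain ⟨_, hy, z, hz, rfl⟩ := mem_sup.1 (restrictTotalDegree_le_one_sup_linearFormsAt_mul (q c)
      (n + 1) ((mem_restrictTotalDegree _ _ _).2 hf_deg))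
    obtain ⟨y, rfl⟩ := mem_one.1 hy
    have hz_eval := (mem_vanishingSubmodule.1 (h_vanish hz)).2 c (mem_singleton_self c)
    have hy_zero : y = 0 := by
      simpa [algebraMap_eq, hz_eval] using hf_eval c (mem_insert_self c s)
    rwa [hy_zero, map_zero, zero_add]
  have h_coord : ∀ j ∈ s, eval (q j) (X i₀ - C (q c i₀)) ≠ 0 := fun j hj => by
    rw [map_sub, eval_X, eval_C]
    exact sub_ne_zero.2 fun h => hc (hq h ▸ hj)
  have h_koszul := vanishingSubmodule_inf_iSup_le (g := fun i => X i - C (q c i))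
    (d := fun _ => 1) (e := n + 1) hq.injOn (fun i => totalDegree_X_sub_C_le i _) h_coord
    fun _ => by omega
  rw [Nat.add_sub_cancel, ← iSup_mul, ← iSup_mul] at h_koszul
  exact h_koszul ⟨mem_vanishingSubmodule.2
    ⟨hf_deg, fun j hj => hf_eval j (mem_insert_of_mem hj)⟩, hf_forms⟩

lemma vanishingSubmodule_insert_succ_le_sup [DecidableEq ι] {q : ι → σ → k} {i₀ : σ}
    (hq : Function.Injective fun j => q j i₀) {s t : Finset ι} (hst : s ⊆ t) {c : ι} (hc : c ∉ t)
    {n : ℕ} (ht : #t ≤ n + 1) :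
    vanishingSubmodule q (insert c s) (n + 1) ≤
      span k {X i₀ - C (q c i₀)} * vanishingSubmodule q s n ⊔
        vanishingSubmodule q (insert c t) (n + 1) := by
  intro f hf
  obtain ⟨hf_deg, hf_eval⟩ := mem_vanishingSubmodule.1 hf
  obtain ⟨b, hb_deg, hb⟩ := exists_totalDegree_le_eval_eq (s := t) hq.injOn fun j =>
    eval (q j) f / (q j i₀ - q c i₀)
  have h_coord : ∀ j ∈ t, q j i₀ - q c i₀ ≠ 0 := fun j hj =>
    sub_ne_zero.2 fun h => hc (hq h ▸ hj)
  refine mem_sup.2 ⟨(X i₀ - C (q c i₀)) * b, mem_span_singleton_mul.2 ⟨b, ?_, rfl⟩,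
    f - (X i₀ - C (q c i₀)) * b, ?_, add_sub_cancel _ _⟩
  · refine mem_vanishingSubmodule.2 ⟨by omega, fun j hj => ?_⟩
    rw [hb j (hst hj), hf_eval j (mem_insert_of_mem hj), zero_div]
  · refine mem_vanishingSubmodule.2 ⟨(totalDegree_sub _ _).trans (max_le hf_deg ?_), ?_⟩
    · have := totalDegree_mul (X i₀ - C (q c i₀)) b
      have := totalDegree_X_sub_C_le i₀ (q c i₀)
      omega
    · refine forall_mem_insert .. |>.2 ⟨?_, fun j hj => ?_⟩
      · simp [hf_eval c (mem_insert_self c s)]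
      · simp [hb j hj, mul_div_cancel₀ _ (h_coord j hj)]

end Interpolation

section ReesAlgebra

variable {σ k : Type*} [CommRing k]

/-- The presentation of the Rees algebra of the degree filtration on polynomials in `σ`: the extra
variable `none` goes to the grading parameter `t`, and `some i` goes to `X i * t`. -/
def reesHom (σ k : Type*) [CommRing k] :
    MvPolynomial (Option σ) k →ₐ[k] Polynomial (MvPolynomial σ k) :=
  aeval fun o => o.elim Polynomial.X fun i => Polynomial.C (X i) * Polynomial.X

lemma coeff_reesHom_mem (F : MvPolynomial (Option σ) k) (e : ℕ) :
    (reesHom σ k F).coeff e ∈ restrictTotalDegree σ k e := by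
  simp only [mem_restrictTotalDegree]
  induction F using MvPolynomial.induction_on generalizing e with
  | C a =>
    rw [reesHom, aeval_C, Polynomial.algebraMap_apply, Polynomial.coeff_C]
    split_ifs <;> simp [algebraMap_eq]
  | add F G hF hG =>
    rw [map_add, Polynomial.coeff_add]
    exact (totalDegree_add _ _).trans (max_le (hF e) (hG e))
  | mul_X F o hF =>
    rw [map_mul, reesHom, aeval_X, ← reesHom]
    cases e with
    | zero => cases o <;> simp [← mul_assoc]
    | succ e =>
      cases o with
      | none => simpa using (hF e).trans e.le_succ
      | some i =>
        simp only [Option.elim_some, ← mul_assoc, Polynomial.coeff_mul_X, Polynomial.coeff_mul_C]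
        exact (totalDegree_mul _ _).trans (add_le_add (hF e)
          ((totalDegree_monomial_le _ _).trans (by simp)))

lemma restrictTotalDegree_le_comap_range_reesHom (e : ℕ) : restrictTotalDegree σ k e ≤
    (reesHom σ k).toLinearMap.range.comap ((Polynomial.monomial e).restrictScalars k) := by
  have h_one : ∀ n, (1 : Submodule k (MvPolynomial σ k)) ≤
      (reesHom σ k).toLinearMap.range.comap ((Polynomial.monomial n).restrictScalars k) :=
    fun n => Submodule.one_le.2 ⟨X none ^ n, by simp [reesHom, Polynomial.X_pow_eq_monomial]⟩
  induction e with
  | zero =>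
    exact restrictTotalDegree_zero_le.trans (h_one 0)
  | succ e ih =>
    refine (restrictTotalDegree_succ_le e).trans (sup_le (h_one _) (iSup_le fun i => ?_))
    refine span_singleton_mul_le_iff.2 fun f hf => ?_
    obtain ⟨F, hF⟩ := ih hf
    refine ⟨X (some i) * F, ?_⟩
    rw [AlgHom.toLinearMap_apply, LinearMap.restrictScalars_apply] at hF ⊢
    rw [map_mul, hF, reesHom, aeval_X, Option.elim_some, mul_assoc, Polynomial.X_mul_monomial,
      Polynomial.C_mul_monomial]

theorem exists_finset_le_iSup_span_mul [Finite σ] [IsNoetherianRing k]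
    {J : ℕ → Submodule k (MvPolynomial σ k)} (hJ : ∀ e, J e ≤ restrictTotalDegree σ k e) :
    ∃ s : Finset (ℕ × MvPolynomial σ k), (∀ x ∈ s, x.2 ∈ J x.1) ∧ ∀ e, (∀ x ∈ s, x.1 ≤ e) →
      J e ≤ ⨆ x : s, span k {x.1.2} * restrictTotalDegree σ k (e - x.1.1) := by
  classical
  let S := {F | ∃ d, ∃ f ∈ J d, reesHom σ k F = Polynomial.monomial d f}
  obtain ⟨T, hTS, hT⟩ := Submodule.fg_span_iff_fg_span_finset_subset S |>.1
    (IsNoetherian.noetherian (span (MvPolynomial (Option σ) k) S))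
  choose! d g hg hψ using fun F (hF : F ∈ T) => hTS hF
  refine ⟨T.image fun F => (d F, g F), ?_, fun e he f hf => ?_⟩
  · simpa only [forall_mem_image] using hg
  obtain ⟨F, hF : reesHom σ k F = Polynomial.monomial e f⟩ :=
    restrictTotalDegree_le_comap_range_reesHom e (hJ e hf)
  have hF_span : F ∈ span (MvPolynomial (Option σ) k) (T : Set (MvPolynomial (Option σ) k)) :=
    hT ▸ subset_span ⟨e, f, hf, hF⟩
  obtain ⟨c, hc⟩ := mem_span_finset'.1 hF_span
  have hf_sum : f = ∑ G : T, g G * (reesHom σ k (c G)).coeff (e - d G) := by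
    rw [← Polynomial.coeff_monomial_same e f, ← hF, ← hc, map_sum, Polynomial.finsetSum_coeff]
    refine sum_congr rfl fun G _ => ?_
    have h_coeff := Polynomial.coeff_mul_monomial (reesHom σ k (c G)) (d G) (e - d G) (g G)
    rw [Nat.sub_add_cancel (he _ (mem_image_of_mem _ G.2)), mul_comm _ (g G)] at h_coeff
    rw [smul_eq_mul, map_mul, hψ G G.2, h_coeff]
  rw [hf_sum]
  exact sum_mem fun G _ => mem_iSup_of_mem ⟨(d G, g G), mem_image_of_mem _ G.2⟩
    (mem_span_singleton_mul.2 ⟨_, coeff_reesHom_mem _ _, rfl⟩)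

end ReesAlgebra

section Stabilization

variable {k : Type*} [Field k]

open Filter

lemma eventually_injective_of_surjective {Q : ℕ → Type*} [∀ n, AddCommGroup (Q n)]
    [∀ n, Module k (Q n)] [∀ n, FiniteDimensional k (Q n)] {φ : ∀ n, Q n →ₗ[k] Q (n + 1)}
    (hφ : ∀ n, Function.Surjective (φ n)) : ∀ᶠ n in atTop, Function.Injective (φ n) := by
  have h_anti : Antitone fun n => Module.finrank k (Q n) :=
    antitone_nat_of_succ_le fun n => (φ n).finrank_le_finrank_of_surjective (hφ n)
  obtain ⟨N, hN⟩ := WellFoundedLT.antitone_chain_condition h_anti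
  filter_upwards [eventually_ge_atTop N] with n hn
  have h_finrank := (hN n hn).symm.trans (hN (n + 1) (hn.trans n.le_succ))
  exact (LinearMap.injective_iff_surjective_of_finrank_eq_finrank h_finrank).2 (hφ n)

lemma eventually_inf_comap_le {A : Type*} [AddCommGroup A] [Module k A]
    {Y J : ℕ → Submodule k A} [∀ n, FiniteDimensional k (Y n)] {w : ℕ → Module.End k A}
    (hY : ∀ n, Y n ≤ (Y (n + 1)).comap (w n)) (hJ : ∀ n, J n ≤ (J (n + 1)).comap (w n))
    (hYJ : ∀ n, Y (n + 1) ≤ (Y n).map (w n) ⊔ J (n + 1)) :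
    ∀ᶠ n in atTop, Y n ⊓ (J (n + 1)).comap (w n) ≤ J n := by
  let φ n : (Y n ⧸ (J n).submoduleOf (Y n)) →ₗ[k] Y (n + 1) ⧸ (J (n + 1)).submoduleOf (Y (n + 1)) :=
    mapQ _ _ ((w n).restrict (hY n)) fun f hf => hJ n hf
  have hφ : ∀ n, Function.Surjective (φ n) := by
    intro n y
    obtain ⟨⟨y, hy⟩, rfl⟩ := mkQ_surjective _ y
    obtain ⟨_, ⟨f, hf, rfl⟩, z, hz, rfl⟩ := mem_sup.1 (hYJ n hy)
    refine ⟨mkQ _ ⟨f, hf⟩, (Submodule.Quotient.eq _).2 ?_⟩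
    change w n f - (w n f + z) ∈ J (n + 1)
    rwa [sub_add_cancel_left, neg_mem_iff]
  filter_upwards [eventually_injective_of_surjective hφ] with n hn f ⟨hf, hwf⟩
  have h_zero : φ n (mkQ _ ⟨f, hf⟩) = 0 := (Submodule.Quotient.mk_eq_zero _).2 hwf
  exact (Submodule.Quotient.mk_eq_zero ((J n).submoduleOf (Y n))).1
    ((map_eq_zero_iff _ hn).1 h_zero)

end Stabilization

section EventualGeneration

variable {σ k τ : Type*} [Field k] {q : ℕ → σ → k} {i₀ : σ}
  {J : ℕ → Submodule k (MvPolynomial σ k)} {g : τ → MvPolynomial σ k} {d : τ → ℕ} {N : ℕ}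

open Filter

/-- A sequence of points is critically dense if every nonzero polynomial vanishes at only finitely
many of its terms. -/
def CriticallyDense (q : ℕ → σ → k) : Prop :=
  ∀ f : MvPolynomial σ k, f ≠ 0 → ∀ᶠ n in atTop, eval (q n) f ≠ 0

/-- The combinations, of total degree at most `e`, of polynomials `g i` of degree at most `d i`,
where the coefficient of `g i` is required to vanish at the points `q j` with `b i ≤ j < e`. -/
def combinations (q : ℕ → σ → k) (g : τ → MvPolynomial σ k) (d b : τ → ℕ) (e : ℕ) :
    Submodule k (MvPolynomial σ k) :=
  ⨆ i, span k {g i} * vanishingSubmodule q (Ico (b i) e) (e - d i)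

lemma span_singleton_mul_le_combinations (b : τ → ℕ) (e : ℕ) (i : τ) :
    span k {g i} * vanishingSubmodule q (Ico (b i) e) (e - d i) ≤ combinations q g d b e :=
  le_iSup (fun i => span k {g i} * vanishingSubmodule q (Ico (b i) e) (e - d i)) i

lemma span_singleton_mul_vanishingSubmodule_le (hq : Function.Injective fun n => q n i₀)
    (hLJ : ∀ e, linearFormsAt (q e) * J e ≤ J (e + 1)) {c : ℕ} {f : MvPolynomial σ k}
    (hf : f ∈ J c) (n : ℕ) : span k {f} * vanishingSubmodule q (Ico c (c + n)) n ≤ J (c + n) ∧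
      span k {f} * vanishingSubmodule q (Ico c (c + n + 1)) (n + 1) ≤
        linearFormsAt (q (c + n)) * J (c + n) := by
  have h_step : ∀ n, span k {f} * vanishingSubmodule q (Ico c (c + n)) n ≤ J (c + n) →
      span k {f} * vanishingSubmodule q (Ico c (c + n + 1)) (n + 1) ≤
        linearFormsAt (q (c + n)) * J (c + n) := fun n hn => by
    rw [← insert_Ico_right_eq_Ico_add_one (Nat.le_add_right c n)]
    calc span k {f} * vanishingSubmodule q (insert (c + n) (Ico c (c + n))) (n + 1)
        ≤ span k {f} * (linearFormsAt (q (c + n)) * vanishingSubmodule q (Ico c (c + n)) n) :=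
          mul_le_mul_right (vanishingSubmodule_insert_succ_le hq (by simp) (by simp)) _
      _ = linearFormsAt (q (c + n)) * (span k {f} * vanishingSubmodule q (Ico c (c + n)) n) :=
          mul_left_comm _ _ _
      _ ≤ _ := mul_le_mul_right hn _
  have h_le : span k {f} * vanishingSubmodule q (Ico c (c + n)) n ≤ J (c + n) := by
    induction n with
    | zero =>
      rw [add_zero, Ico_self, vanishingSubmodule_empty]
      refine (mul_le_mul_right restrictTotalDegree_zero_le _).trans ?_
      rwa [mul_one, span_singleton_le_iff_mem]
    | succ n ih => exact (h_step n ih).trans (hLJ _)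
  exact ⟨h_le, h_step n h_le⟩

lemma combinations_self_succ_le (hq : Function.Injective fun n => q n i₀)
    (hLJ : ∀ e, linearFormsAt (q e) * J e ≤ J (e + 1)) (hg : ∀ i, g i ∈ J (d i)) {e : ℕ}
    (he : ∀ i, d i ≤ e) : combinations q g d d (e + 1) ≤ linearFormsAt (q e) * J e := by
  refine iSup_le fun i => ?_
  obtain ⟨n, rfl⟩ := exists_add_of_le (he i)
  rw [add_assoc, Nat.add_sub_cancel_left, ← add_assoc]
  exact (span_singleton_mul_vanishingSubmodule_le hq hLJ (hg i) n).2

lemma le_combinations_const (hq : Function.Injective fun n => q n i₀)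
    (hJ : ∀ e, J e ≤ vanishingSubmodule q (range e) e) (hg : ∀ i, (g i).totalDegree ≤ d i) {a : τ}
    (ha : ∀ n ≥ N, eval (q n) (g a) ≠ 0) (hN : ∀ i, d i + d a ≤ N) {e : ℕ} (he : N ≤ e)
    (hJe : J e ≤ ⨆ i, span k {g i} * restrictTotalDegree σ k (e - d i)) :
    J e ≤ combinations q g d (fun _ => N) e := by
  refine (le_inf (fun f hf => ?_) hJe).trans <| vanishingSubmodule_inf_iSup_le hq.injOn hg
    (fun n hn => ha n (mem_Ico.1 hn).1) fun i => ?_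
  · obtain ⟨hf_deg, hf_eval⟩ := mem_vanishingSubmodule.1 (hJ e hf)
    exact mem_vanishingSubmodule.2 ⟨hf_deg, fun n hn => hf_eval n (mem_range.2 (mem_Ico.1 hn).2)⟩
  · have := hN i
    rw [Nat.card_Ico]
    omega

lemma combinations_const_succ_le (hq : Function.Injective fun n => q n i₀)
    (hN : ∀ i, d i ≤ N) {e : ℕ} (he : N ≤ e) :
    combinations q g d (fun _ => N) (e + 1) ≤
      span k {X i₀ - C (q e i₀)} * combinations q g d (fun _ => N) e ⊔
        combinations q g d d (e + 1) := by
  refine iSup_le fun i => ?_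
  have hie := (hN i).trans he
  have h_peel : vanishingSubmodule q (Ico N (e + 1)) (e + 1 - d i) ≤
      span k {X i₀ - C (q e i₀)} * vanishingSubmodule q (Ico N e) (e - d i) ⊔
        vanishingSubmodule q (Ico (d i) (e + 1)) (e + 1 - d i) := by
    rw [← insert_Ico_right_eq_Ico_add_one he, ← insert_Ico_right_eq_Ico_add_one hie,
      Nat.sub_add_comm hie]
    exact vanishingSubmodule_insert_succ_le_sup hq (Ico_subset_Ico_left (hN i)) right_notMem_Ico
      ((Nat.card_Ico _ _).trans_le (Nat.le_succ _))
  calc span k {g i} * vanishingSubmodule q (Ico N (e + 1)) (e + 1 - d i)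
      ≤ span k {g i} * (span k {X i₀ - C (q e i₀)} * vanishingSubmodule q (Ico N e) (e - d i) ⊔
          vanishingSubmodule q (Ico (d i) (e + 1)) (e + 1 - d i)) := mul_le_mul_right h_peel _
    _ = span k {X i₀ - C (q e i₀)} *
            (span k {g i} * vanishingSubmodule q (Ico N e) (e - d i)) ⊔
          span k {g i} * vanishingSubmodule q (Ico (d i) (e + 1)) (e + 1 - d i) := by
        rw [Submodule.mul_sup, mul_left_comm]
    _ ≤ _ := sup_le_sup
        (mul_le_mul_right (span_singleton_mul_le_combinations (fun _ => N) e i) _)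
        (span_singleton_mul_le_combinations d (e + 1) i)

lemma span_mul_combinations_const_le {e : ℕ} (hd : ∀ i, d i ≤ e) (i₀ : σ) (he : N ≤ e) :
    span k {X i₀ - C (q e i₀)} * combinations q g d (fun _ => N) e ≤
      combinations q g d (fun _ => N) (e + 1) := by
  rw [combinations, mul_iSup]
  refine iSup_mono fun i => ?_
  rw [mul_left_comm, ← insert_Ico_right_eq_Ico_add_one he, Nat.sub_add_comm (hd i)]
  exact mul_le_mul_right ((mul_le_mul_left (le_iSup (fun i => span k {X i - C (q e i)}) i₀) _).trans
    (linearFormsAt_mul_vanishingSubmodule_le q _ e _)) _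

lemma combinations_le_restrictTotalDegree (hg : ∀ i, (g i).totalDegree ≤ d i) {e : ℕ}
    (he : ∀ i, d i ≤ e) (b : τ → ℕ) : combinations q g d b e ≤ restrictTotalDegree σ k e :=
  iSup_le fun i => span_singleton_mul_le_iff.2 fun f hf => by
    have := totalDegree_mul (g i) f
    have := (mem_vanishingSubmodule.1 hf).1
    have := hg i
    have := he i
    rw [mem_restrictTotalDegree]
    omega

lemma map_mulLeft_eq_span_singleton_mul (l : MvPolynomial σ k)
    (P : Submodule k (MvPolynomial σ k)) : P.map (LinearMap.mulLeft k l) = span k {l} * P := by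
  ext f
  simp [mem_span_singleton_mul]

lemma eventually_le_linearFormsAt_mul_of_generators [Finite σ] [Finite τ]
    (hq : Function.Injective fun n => q n i₀) (hcrit : CriticallyDense q)
    (hJ : ∀ e, J e ≤ vanishingSubmodule q (range e) e)
    (hLJ : ∀ e, linearFormsAt (q e) * J e ≤ J (e + 1)) (hg : ∀ i, g i ∈ J (d i)) {a : τ}
    (ha : g a ≠ 0)
    (hJg : ∀ᶠ e in atTop, J e ≤ ⨆ i, span k {g i} * restrictTotalDegree σ k (e - d i)) :
    ∀ᶠ e in atTop, J (e + 1) ≤ linearFormsAt (q e) * J e := by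
  have hg_deg : ∀ i, (g i).totalDegree ≤ d i := fun i => (mem_vanishingSubmodule.1 (hJ _ (hg i))).1
  obtain ⟨N, hN⟩ := ((hcrit _ ha).and <| hJg.and <| eventually_all.2 fun i =>
    eventually_ge_atTop (d i + d a)).exists_forall_of_atTop
  have hdN : ∀ i, d i ≤ N := fun i => le_of_add_le_left ((hN N le_rfl).2.2 i)
  have h_le : ∀ e ≥ N, J e ≤ combinations q g d (fun _ => N) e := fun e he =>
    le_combinations_const hq hJ hg_deg (fun n hn => (hN n hn).1) (hN N le_rfl).2.2 he (hN e he).2.1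
  have h_self : ∀ e ≥ N, combinations q g d d (e + 1) ≤ linearFormsAt (q e) * J e := fun e he =>
    combinations_self_succ_le hq hLJ hg fun i => (hdN i).trans he
  have h_finite : ∀ n, FiniteDimensional k (combinations q g d (fun _ => N) (N + n)) := fun n =>
    Submodule.finiteDimensional_of_le
      (combinations_le_restrictTotalDegree hg_deg (fun i => le_add_right (hdN i)) _)
  have h_stable := eventually_inf_comap_le
    (Y := fun n => combinations q g d (fun _ => N) (N + n)) (J := fun n => J (N + n))
    (w := fun n => LinearMap.mulLeft k (X i₀ - C (q (N + n) i₀)))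
    (fun n => by
      rw [← Submodule.map_le_iff_le_comap, map_mulLeft_eq_span_singleton_mul]
      exact span_mul_combinations_const_le (fun i => le_add_right (hdN i)) i₀ (N.le_add_right n))
    (fun n f hf => linearFormsAt_mul_le_iff.1 (hLJ (N + n)) i₀ f hf)
    (fun n => by
      rw [map_mulLeft_eq_span_singleton_mul]
      exact (combinations_const_succ_le hq hdN (N.le_add_right n)).trans
        (sup_le_sup_left ((h_self _ (N.le_add_right n)).trans (hLJ _)) _))
  filter_upwards [(tendsto_sub_atTop_nat N).eventually h_stable, eventually_ge_atTop N]
    with e h_inj he f hf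
  rw [← add_assoc, Nat.add_sub_cancel' he] at h_inj
  obtain ⟨_, h_forms, z, hz, rfl⟩ := mem_sup.1 <| combinations_const_succ_le hq hdN he <|
    h_le (e + 1) (he.trans e.le_succ) hf
  obtain ⟨y, hy, rfl⟩ := mem_span_singleton_mul.1 h_forms
  have hz_forms := h_self e he hz
  have hyJ : y ∈ J e := h_inj ⟨hy, ((J (e + 1)).add_mem_iff_left (hLJ e hz_forms)).1 hf⟩
  exact add_mem (linearFormsAt_mul_le_iff.1 le_rfl i₀ y hyJ) hz_forms

theorem eventually_le_linearFormsAt_mul [Finite σ] (hq : Function.Injective fun n => q n i₀)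
    (hcrit : CriticallyDense q) (hJ : ∀ e, J e ≤ vanishingSubmodule q (range e) e)
    (hLJ : ∀ e, linearFormsAt (q e) * J e ≤ J (e + 1)) :
    ∀ᶠ e in atTop, J (e + 1) ≤ linearFormsAt (q e) * J e := by
  obtain ⟨s, hsJ, hs⟩ := exists_finset_le_iSup_span_mul fun e => (hJ e).trans inf_le_left
  have hJs : ∀ᶠ e in atTop,
      J e ≤ ⨆ x : s, span k {x.1.2} * restrictTotalDegree σ k (e - x.1.1) := by
    filter_upwards [(Finset.eventually_all s).2 fun x _ => eventually_ge_atTop x.1] using hs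
  by_cases h_zero : ∀ x ∈ s, x.2 = 0
  · filter_upwards [(tendsto_add_atTop_nat 1).eventually hJs] with e he
    refine he.trans (iSup_le fun x => ?_)
    simp [h_zero x x.2]
  · push Not at h_zero
    obtain ⟨x, hxs, hx⟩ := h_zero
    exact eventually_le_linearFormsAt_mul_of_generators (τ := s) (g := fun y => y.1.2)
      (d := fun y => y.1.1) (a := ⟨x, hxs⟩) hq hcrit hJ hLJ (fun y => hsJ y y.2) hx hJs

end EventualGeneration

section LeadingSymbols

variable {σ k S M : Type*} [Field k] [Ring S] [AddCommGroup M] [Module k M] [Module S M]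
  {q : ℕ → σ → k} {w : σ → S} {Φ : ℕ → MvPolynomial σ k →ₗ[k] M} {d : ℕ}

/-- The operators `w i` raise the degree by one, and up to nonzero scalars they act on the symbols
of degree `d` as multiplication by the linear forms `X i - q d i`. Here `Φ d f` is the element of
degree `d` with symbol `f`. -/
def ActsByLinearForms (q : ℕ → σ → k) (w : σ → S) (Φ : ℕ → MvPolynomial σ k →ₗ[k] M) : Prop :=
  ∀ d i, ∃ u : k, u ≠ 0 ∧ ∀ f, w i • Φ d f = u • Φ (d + 1) ((X i - C (q d i)) * f)

/-- The sums of elements `Φ e f` with `e < d`, where `f` has degree at most `e` and vanishes at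
`q 0, …, q (e - 1)`. -/
def symbolFiltration (q : ℕ → σ → k) (Φ : ℕ → MvPolynomial σ k →ₗ[k] M) (d : ℕ) : Submodule k M :=
  (range d).sup fun e => (vanishingSubmodule q (range e) e).map (Φ e)

lemma symbolFiltration_mono : Monotone (symbolFiltration q Φ) := fun _ _ h =>
  Finset.sup_mono (range_subset_range.2 h)

lemma symbolFiltration_succ (d : ℕ) : symbolFiltration q Φ (d + 1) =
    (vanishingSubmodule q (range d) d).map (Φ d) ⊔ symbolFiltration q Φ d := by
  rw [symbolFiltration, range_add_one, sup_insert, symbolFiltration]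

instance [Finite σ] : FiniteDimensional k (vanishingSubmodule q (range d) d) :=
  Submodule.finiteDimensional_of_le inf_le_left

instance [Finite σ] : FiniteDimensional k (symbolFiltration q Φ d) :=
  Submodule.finiteDimensional_finset_sup _ _

lemma ActsByLinearForms.linearFormsAt_mul_le_comap (hw : ActsByLinearForms q w Φ)
    {N : Submodule k (MvPolynomial σ k)} {P : Submodule k M}
    (h : ∀ i, ∀ f ∈ N, w i • Φ d f ∈ P) : linearFormsAt (q d) * N ≤ P.comap (Φ (d + 1)) := by
  refine linearFormsAt_mul_le_iff.2 fun i f hf => ?_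
  obtain ⟨u, hu, hui⟩ := hw d i
  have h_smul := h i f hf
  rw [hui] at h_smul
  exact (P.smul_mem_iff hu).1 h_smul

variable [Algebra k S] [IsScalarTower k S M] {I G : Submodule S M}

lemma ActsByLinearForms.smul_mem_symbolFiltration (hw : ActsByLinearForms q w Φ) (i : σ) {m : M}
    (hm : m ∈ symbolFiltration q Φ d) : w i • m ∈ symbolFiltration q Φ (d + 1) := by
  suffices h : symbolFiltration q Φ d ≤
      (symbolFiltration q Φ (d + 1)).comap (Algebra.lsmul k k M (w i)) from h hm
  refine Finset.sup_le fun e he => map_le_iff_le_comap.2 fun f hf => ?_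
  obtain ⟨u, -, hu⟩ := hw e i
  change w i • Φ e f ∈ symbolFiltration q Φ (d + 1)
  have h_prod : (X i - C (q e i)) * f ∈ vanishingSubmodule q (range (e + 1)) (e + 1) := by
    rw [range_add_one]
    exact linearFormsAt_mul_le_iff.1 (linearFormsAt_mul_vanishingSubmodule_le q _ e e) i f hf
  rw [hu]
  refine symbolFiltration_mono (Nat.succ_le_succ (mem_range.1 he)) ?_
  rw [symbolFiltration_succ]
  exact smul_mem _ _ (mem_sup_left (mem_map_of_mem h_prod))

/-- The symbols of degree `d` of the elements of `I`. -/
def leadingSymbols (q : ℕ → σ → k) (Φ : ℕ → MvPolynomial σ k →ₗ[k] M) (I : Submodule S M)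
    (d : ℕ) : Submodule k (MvPolynomial σ k) :=
  vanishingSubmodule q (range d) d ⊓ (I.restrictScalars k ⊔ symbolFiltration q Φ d).comap (Φ d)

lemma ActsByLinearForms.linearFormsAt_mul_leadingSymbols_le (hw : ActsByLinearForms q w Φ)
    (I : Submodule S M) (d : ℕ) :
    linearFormsAt (q d) * leadingSymbols q Φ I d ≤ leadingSymbols q Φ I (d + 1) := by
  refine le_inf ?_ (hw.linearFormsAt_mul_le_comap fun i f hf => ?_)
  · rw [range_add_one]
    exact (mul_le_mul_right inf_le_left _).trans (linearFormsAt_mul_vanishingSubmodule_le q _ d d)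
  · obtain ⟨a, ha, b, hb, hab⟩ := mem_sup.1 hf.2
    rw [← hab, smul_add]
    exact add_mem_sup (I.smul_mem _ ha) (hw.smul_mem_symbolFiltration i hb)

lemma inf_symbolFiltration_succ_le_map_leadingSymbols :
    I.restrictScalars k ⊓ symbolFiltration q Φ (d + 1) ≤
      (leadingSymbols q Φ I d).map (Φ d) ⊔ symbolFiltration q Φ d := by
  rw [symbolFiltration_succ]
  rintro _ ⟨haI, ha⟩
  obtain ⟨_, ⟨f, hf, rfl⟩, b, hb, rfl⟩ := mem_sup.1 ha
  refine add_mem_sup (mem_map_of_mem ⟨hf, ?_⟩) hb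
  rw [SetLike.mem_coe, Submodule.mem_comap, ← add_sub_cancel_right (Φ d f) b]
  exact sub_mem (mem_sup_left haI) (mem_sup_right hb)

lemma ActsByLinearForms.inf_symbolFiltration_succ_le (hw : ActsByLinearForms q w Φ) (hGI : G ≤ I)
    (hd : leadingSymbols q Φ I (d + 1) ≤ linearFormsAt (q d) * leadingSymbols q Φ I d)
    (hG : I.restrictScalars k ⊓ symbolFiltration q Φ (d + 1) ≤ G.restrictScalars k) :
    I.restrictScalars k ⊓ symbolFiltration q Φ (d + 2) ≤ G.restrictScalars k := by
  have h_symbols : (leadingSymbols q Φ I (d + 1)).map (Φ (d + 1)) ≤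
      G.restrictScalars k ⊔ symbolFiltration q Φ (d + 1) := by
    refine map_le_iff_le_comap.2 (hd.trans (hw.linearFormsAt_mul_le_comap fun i f hf => ?_))
    obtain ⟨a, ha, b, hb, hab⟩ := mem_sup.1 hf.2
    have ha_filtration : a ∈ symbolFiltration q Φ (d + 1) := by
      rw [symbolFiltration_succ, eq_sub_of_add_eq hab]
      exact sub_mem (mem_sup_left (mem_map_of_mem hf.1)) (mem_sup_right hb)
    rw [← hab, smul_add]
    exact add_mem_sup (G.smul_mem _ (hG ⟨ha, ha_filtration⟩)) (hw.smul_mem_symbolFiltration i hb)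
  calc I.restrictScalars k ⊓ symbolFiltration q Φ (d + 2)
      ≤ (G.restrictScalars k ⊔ symbolFiltration q Φ (d + 1)) ⊓ I.restrictScalars k :=
        le_inf (inf_symbolFiltration_succ_le_map_leadingSymbols.trans
          (sup_le h_symbols le_sup_right)) inf_le_left
    _ = G.restrictScalars k ⊔ symbolFiltration q Φ (d + 1) ⊓ I.restrictScalars k :=
        sup_inf_assoc_of_le _ hGI
    _ ≤ G.restrictScalars k := sup_le le_rfl (inf_comm _ (I.restrictScalars k) ▸ hG)

theorem ActsByLinearForms.fg [Finite σ] (hw : ActsByLinearForms q w Φ) {i₀ : σ}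
    (hq : Function.Injective fun n => q n i₀) (hcrit : CriticallyDense q) {I : Submodule S M}
    (hI : I.restrictScalars k ≤ ⨆ d, symbolFiltration q Φ d) : I.FG := by
  obtain ⟨N, hN⟩ := (eventually_le_linearFormsAt_mul hq hcrit (fun _ => inf_le_left)
    (hw.linearFormsAt_mul_leadingSymbols_le I)).exists_forall_of_atTop
  set I₀ := I.restrictScalars k ⊓ symbolFiltration q Φ (N + 1)
  have h_finite : FiniteDimensional k I₀ := Submodule.finiteDimensional_of_le inf_le_right
  obtain ⟨T, hT⟩ := (Module.Finite.iff_fg (N := I₀)).1 h_finite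
  have hI₀ : I₀ ≤ (span S (T : Set M)).restrictScalars k := hT ▸ span_le_restrictScalars k S _
  have hTI : span S (T : Set M) ≤ I := span_le.2 fun x hx => (hT ▸ subset_span hx : x ∈ I₀).1
  have h_le : ∀ d ≥ N, I.restrictScalars k ⊓ symbolFiltration q Φ (d + 1) ≤
      (span S (T : Set M)).restrictScalars k := fun d hd => by
    induction d, hd using Nat.le_induction with
    | base => exact hI₀
    | succ d hd ih => exact hw.inf_symbolFiltration_succ_le hTI (hN d hd) ih
  refine ⟨T, le_antisymm hTI fun x hx => ?_⟩
  obtain ⟨d, hd⟩ := (mem_iSup_of_directed _ symbolFiltration_mono.directed_le).1 (hI hx)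
  exact h_le _ (le_max_left N d) ⟨hx, symbolFiltration_mono (by omega) hd⟩

end LeadingSymbols

section Adjoin

variable {σ k B : Type*} [Field k] [Ring B] [Algebra k B] {q : ℕ → σ → k} {w : σ → B}
  {Φ : ℕ → MvPolynomial σ k →ₗ[k] B}

lemma ActsByLinearForms.adjoin_le_iSup_symbolFiltration (hw : ActsByLinearForms q w Φ)
    (hΦ : Φ 0 1 = 1) :
    (Algebra.adjoin k (Set.range w)).toSubmodule ≤ ⨆ d, symbolFiltration q Φ d := by
  suffices h : ∀ a ∈ Algebra.adjoin k (Set.range w), ∀ b ∈ ⨆ d, symbolFiltration q Φ d,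
      a * b ∈ ⨆ d, symbolFiltration q Φ d by
    intro a ha
    rw [← mul_one a]
    refine h a ha 1 (mem_iSup_of_mem 1 ?_)
    rw [symbolFiltration_succ, ← hΦ]
    exact mem_sup_left (mem_map_of_mem (mem_vanishingSubmodule.2 (by simp)))
  intro a ha
  induction ha using Algebra.adjoin_induction with
  | mem x hx =>
    obtain ⟨i, rfl⟩ := hx
    have h_le : ⨆ d, symbolFiltration q Φ d ≤
        (⨆ d, symbolFiltration q Φ d).comap (LinearMap.mulLeft k (w i)) :=
      iSup_le fun d b hb => mem_iSup_of_mem (d + 1) (hw.smul_mem_symbolFiltration i hb)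
    exact fun b hb => h_le hb
  | algebraMap r => exact fun b hb => Algebra.smul_def r b ▸ smul_mem _ r hb
  | add x y _ _ hx hy => exact fun b hb => add_mul x y b ▸ add_mem (hx b hb) (hy b hb)
  | mul x y _ _ hx hy => exact fun b hb => mul_assoc x y b ▸ hx _ (hy b hb)

theorem ActsByLinearForms.isNoetherianRing_adjoin [Finite σ] (hw : ActsByLinearForms q w Φ)
    (hΦ : Φ 0 1 = 1) {i₀ : σ} (hq : Function.Injective fun n => q n i₀)
    (hcrit : CriticallyDense q) : IsNoetherianRing (Algebra.adjoin k (Set.range w)) := by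
  set S := Algebra.adjoin k (Set.range w)
  have hwS : ∀ i, w i ∈ S := fun i => Algebra.subset_adjoin ⟨i, rfl⟩
  have hwS_acts : ActsByLinearForms q (fun i => (⟨w i, hwS i⟩ : S)) Φ := hw
  refine isNoetherianRing_iff_ideal_fg S |>.2 fun I => ?_
  refine fg_of_fg_map_injective (LinearMap.toSpanSingleton S B 1) (fun a b hab => ?_)
    (hwS_acts.fg hq hcrit ?_)
  · exact Subtype.ext (by simpa [Subalgebra.smul_def] using hab)
  · rintro _ ⟨a, -, rfl⟩
    refine hw.adjoin_le_iSup_symbolFiltration hΦ ?_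
    simp [Subalgebra.smul_def]

end Adjoin

section CriticalDensity

variable {σ k : Type*}

lemma CriticallyDense.inv [Field k] {q : ℕ → σ → k} (hq : CriticallyDense q)
    (hq₀ : ∀ n i, q n i ≠ 0) : CriticallyDense fun n i => (q n i)⁻¹ := by
  classical
  intro f hf
  set M : σ →₀ ℕ := f.support.sup id
  have hM : ∀ m ∈ f.support, m ≤ M := fun m hm => le_sup (f := id) hm
  set g : MvPolynomial σ k := ∑ m ∈ f.support, monomial (M - m) (coeff m f) with hg_def
  have hg : g ≠ 0 := by
    obtain ⟨m, hm⟩ := support_nonempty.2 hf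
    refine ne_zero_iff.2 ⟨M - m, ?_⟩
    rw [hg_def, coeff_sum, sum_eq_single_of_mem m hm fun m' hm' hne => ?_, coeff_monomial,
      if_pos rfl]
    · exact mem_support_iff.1 hm
    · rw [coeff_monomial, if_neg (mt (tsub_right_inj (hM m' hm') (hM m hm)).1 hne)]
  have h_eval : ∀ n, eval (q n) g =
      (M.prod fun i e => q n i ^ e) * eval (fun i => (q n i)⁻¹) f := fun n => by
    rw [eval_eq _ f, mul_sum, hg_def, map_sum]
    refine sum_congr rfl fun m hm => ?_
    have h_prod : (M.prod fun i e => q n i ^ e) =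
        ((M - m).prod fun i e => q n i ^ e) * m.prod fun i e => q n i ^ e := by
      rw [← Finsupp.prod_add_index' (fun _ => pow_zero _) fun _ _ _ => pow_add _ _ _,
        tsub_add_cancel_of_le (hM m hm)]
    have h_inv : ∏ i ∈ m.support, (q n i)⁻¹ ^ m i = (m.prod fun i e => q n i ^ e)⁻¹ := by
      simp only [inv_pow, prod_inv_distrib, Finsupp.prod]
    have h_ne : (m.prod fun i e => q n i ^ e) ≠ 0 :=
      prod_ne_zero_iff.2 fun i _ => pow_ne_zero _ (hq₀ n i)
    rw [eval_monomial, h_prod, h_inv]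
    field_simp
  filter_upwards [hq g hg] with n hn h
  exact hn (by rw [h_eval, h, mul_zero])

lemma eq_of_nsmul_add_eq_nsmul_add {m m' e e' : σ →₀ ℕ} {n : ℕ} (he : ∀ i, e i < n)
    (he' : ∀ i, e' i < n) (h : n • m + e = n • m' + e') : m = m' := by
  ext i
  have h_coord := DFunLike.congr_fun h i
  simp only [Finsupp.add_apply, Finsupp.smul_apply, smul_eq_mul] at h_coord
  have h_div := congrArg (· / n) h_coord
  have hn := (Nat.zero_le _).trans_lt (he i)
  simpa [Nat.mul_add_div hn, Nat.div_eq_of_lt (he i), Nat.div_eq_of_lt (he' i)] using h_div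

lemma sum_monomial_nsmul_mul_ne_zero {R : Type*} [CommSemiring R] {s : Finset (σ →₀ ℕ)}
    {r : (σ →₀ ℕ) → MvPolynomial σ R} {m₀ : σ →₀ ℕ} (hm₀ : m₀ ∈ s) (hr : r m₀ ≠ 0) {n : ℕ}
    (hn : ∀ m ∈ s, (r m).totalDegree < n) : ∑ m ∈ s, monomial (n • m) 1 * r m ≠ 0 := by
  classical
  obtain ⟨e₀, he₀⟩ := support_nonempty.2 hr
  have h_lt : ∀ m ∈ s, ∀ e ∈ (r m).support, ∀ i, e i < n := fun m hm e he i =>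
    ((Finsupp.le_degree i e).trans (le_totalDegree he)).trans_lt (hn m hm)
  refine ne_zero_iff.2 ⟨n • m₀ + e₀, ?_⟩
  rw [coeff_sum, sum_eq_single_of_mem m₀ hm₀ fun m hm hne => ?_, coeff_monomial_mul, one_mul]
  · exact mem_support_iff.1 he₀
  · rw [coeff_monomial_mul', one_mul]
    refine ite_eq_right_iff.2 fun hle => notMem_support_iff.1 fun he => hne ?_
    exact eq_of_nsmul_add_eq_nsmul_add (h_lt m hm _ he) (h_lt m₀ hm₀ e₀ he₀)
      (add_tsub_cancel_of_le hle)

lemma exists_forall_sum_smul_eq_zero_imp {ι R : Type*} [CommRing R] [IsDomain R] [Field k]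
    [Algebra R k] [FaithfulSMul R k] (s : Finset ι) {c : ι → k} {a : ι} (hc : c a ≠ 0)
    (ha : a ∈ s) : ∃ r : ι → R, r a ≠ 0 ∧
      ∀ x : ι → R, ∑ m ∈ s, x m • c m = 0 → ∑ m ∈ s, x m * r m = 0 := by
  let K := FractionRing R
  let := FractionRing.liftAlgebra R k
  have := FractionRing.isScalarTower_liftAlgebra R k
  obtain ⟨l, hl⟩ : ∃ l : Module.Dual K k, l (c a) ≠ 0 := by
    by_contra! h
    exact hc ((Module.forall_dual_apply_eq_zero_iff K _).1 h)
  obtain ⟨b, hb⟩ := IsLocalization.exist_integer_multiples (nonZeroDivisors R) s fun m => l (c m)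
  choose! r hr using hb
  have h_inj := IsFractionRing.injective R K
  refine ⟨r, fun h => ?_, fun x hx => h_inj ?_⟩
  · have h_smul := hr a ha
    rw [h, map_zero, Algebra.smul_def] at h_smul
    exact mul_ne_zero ((map_ne_zero_iff _ h_inj).2 (nonZeroDivisors.coe_ne_zero b)) hl h_smul.symm
  · calc algebraMap R K (∑ m ∈ s, x m * r m)
        = ∑ m ∈ s, x m • (b : R) • l (c m) := by
          rw [map_sum]
          exact sum_congr rfl fun m hm => by rw [map_mul, hr m hm, Algebra.smul_def (x m)]
      _ = (b : R) • l.restrictScalars R (∑ m ∈ s, x m • c m) := by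
          rw [map_sum, smul_sum]
          refine sum_congr rfl fun m _ => ?_
          rw [map_smul, smul_comm, LinearMap.restrictScalars_apply]
      _ = algebraMap R K 0 := by rw [hx, map_zero, smul_zero, map_zero]

variable {F : Type*} [CommRing F] [Field k] [Algebra F k] {p : σ → k}

open Filter

theorem criticallyDense_pow (hp : AlgebraicIndependent F p) :
    CriticallyDense fun n i => p i ^ n := by
  intro f hf
  have : IsDomain F := hp.algebraMap_injective.isDomain (algebraMap F k)
  let : Algebra (MvPolynomial σ F) k := (aeval p).toAlgebra
  have : FaithfulSMul (MvPolynomial σ F) k := (faithfulSMul_iff_algebraMap_injective _ k).2 hp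
  obtain ⟨m₀, hm₀⟩ := support_nonempty.2 hf
  obtain ⟨r, hr, h_rel⟩ := exists_forall_sum_smul_eq_zero_imp (R := MvPolynomial σ F)
    (c := fun m => coeff m f) f.support (mem_support_iff.1 hm₀) hm₀
  have h_eval : ∀ n, eval (fun i => p i ^ n) f =
      ∑ m ∈ f.support, (monomial (n • m) 1 : MvPolynomial σ F) • coeff m f := fun n => by
    rw [eval_eq]
    refine sum_congr rfl fun m _ => ?_
    have h_monomial : aeval p (monomial (n • m) (1 : F)) = ∏ i ∈ m.support, (p i ^ n) ^ m i := by
      rw [aeval_monomial, map_one, one_mul, Finsupp.prod_of_support_subset _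
        Finsupp.support_smul _ fun _ _ => pow_zero _]
      exact prod_congr rfl fun i _ => by simp [pow_mul]
    rw [Algebra.smul_def, mul_comm, ← h_monomial]
    rfl
  filter_upwards [(Finset.eventually_all f.support).2 fun m _ =>
    eventually_gt_atTop (r m).totalDegree] with n hn h_zero
  exact sum_monomial_nsmul_mul_ne_zero hm₀ hr hn (h_rel _ ((h_eval n).symm.trans h_zero))

lemma pow_injective_of_algebraicIndependent (hp : AlgebraicIndependent F p) (i : σ) :
    Function.Injective fun n : ℕ => p i ^ n := by
  have : Nontrivial F := (algebraMap F k).domain_nontrivial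
  intro m n h
  have h_X : (X i ^ m : MvPolynomial σ F) = X i ^ n := hp (by simpa using h)
  simpa [totalDegree_X_pow] using congrArg totalDegree h_X

end CriticalDensity

section EulerianDerivatives

variable {k σ : Type*} [Field k]

open LaurentPolynomial

lemma linearMap_ext_T {M : Type*} [AddCommGroup M] [Module k M] {A B : k[T;T⁻¹] →ₗ[k] M}
    (h : ∀ n : ℤ, A (T n) = B (T n)) : A = B :=
  (AddMonoidAlgebra.basis ℤ k).ext h

/-- The operator of degree `-d` on Laurent polynomials sending `T n` to `f (c n) • T (n - d)`,
where `f` is a polynomial and `c` a sequence of points. -/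
def evalShift (c : ℤ → σ → k) (d : ℤ) : MvPolynomial σ k →ₗ[k] Module.End k k[T;T⁻¹] :=
  ((AddMonoidAlgebra.basis ℤ k).constr k).toLinearMap ∘ₗ
    LinearMap.pi fun n => (aeval (c n)).toLinearMap.smulRight (T (n - d))

lemma evalShift_apply (c : ℤ → σ → k) (d : ℤ) (f : MvPolynomial σ k) (n : ℤ) :
    evalShift c d f (T n) = eval (c n) f • T (n - d) := by
  have h := (AddMonoidAlgebra.basis ℤ k).constr_basis k
    (fun n => eval (c n) f • (T (n - d) : k[T;T⁻¹])) n
  exact h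

lemma evalShift_zero_one (c : ℤ → σ → k) : evalShift c 0 1 = 1 :=
  linearMap_ext_T fun n => by simp [evalShift_apply]

/-- `A` is the Eulerian derivative with parameter `p`, that is, `f(T) ↦ (f(pT) - f(T)) / (pT - T)`,
described by its values on the monomials. -/
def IsEulerianDerivative (p : k) (A : Module.End k k[T;T⁻¹]) : Prop :=
  ∀ n : ℤ, A (T n) = ((p ^ n - 1) / (p - 1)) • T (n - 1)

variable {p : σ → k} {D : σ → Module.End k k[T;T⁻¹]}

lemma IsEulerianDerivative.mul_evalShift {i : σ} (hD : IsEulerianDerivative (p i) (D i))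
    (hp : p i ≠ 0) (d : ℕ) (f : MvPolynomial σ k) :
    D i * evalShift (fun n i => p i ^ n) d f = ((p i ^ d)⁻¹ / (p i - 1)) •
      evalShift (fun n i => p i ^ n) (d + 1 : ℕ) ((X i - MvPolynomial.C (p i ^ d)) * f) := by
  refine linearMap_ext_T fun n => ?_
  rw [Module.End.mul_apply, evalShift_apply, map_smul, hD, LinearMap.smul_apply, evalShift_apply,
    smul_smul, smul_smul, Nat.cast_succ, sub_sub]
  congr 1
  rw [map_mul, map_sub, eval_X, eval_C, zpow_sub₀ hp, zpow_natCast]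
  field_simp

lemma IsEulerianDerivative.evalShift_mul {i : σ} (hD : IsEulerianDerivative (p i) (D i))
    (hp : p i ≠ 0) (d : ℕ) (f : MvPolynomial σ k) :
    evalShift (fun n i => p i ^ (n - d)) d f * D i = (p i ^ (d + 1) / (p i - 1)) •
      evalShift (fun n i => p i ^ (n - (d + 1 : ℕ))) (d + 1 : ℕ)
        ((X i - MvPolynomial.C (p i ^ (d + 1))⁻¹) * f) := by
  refine linearMap_ext_T fun n => ?_
  rw [Module.End.mul_apply, hD, map_smul, evalShift_apply, LinearMap.smul_apply, evalShift_apply,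
    smul_smul, smul_smul, Nat.cast_succ, sub_sub, add_comm (1 : ℤ)]
  congr 1
  rw [map_mul, map_sub, eval_X, eval_C, zpow_sub₀ hp n, zpow_add_one₀ hp, zpow_natCast, pow_succ]
  field_simp

variable {F : Type*} [CommRing F] [Algebra F k]

lemma ne_one_of_algebraicIndependent (hp : AlgebraicIndependent F p) (i : σ) : p i ≠ 1 :=
  fun h => zero_ne_one (pow_injective_of_algebraicIndependent hp i (by simp [h]))

lemma ne_zero_of_algebraicIndependent (hp : AlgebraicIndependent F p) (i : σ) : p i ≠ 0 :=
  have : Nontrivial F := (algebraMap F k).domain_nontrivial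
  hp.ne_zero i

lemma actsByLinearForms_left (hp : AlgebraicIndependent F p)
    (hD : ∀ i, IsEulerianDerivative (p i) (D i)) :
    ActsByLinearForms (fun n i => p i ^ n) D fun d => evalShift (fun n i => p i ^ n) d :=
  fun d i => ⟨(p i ^ d)⁻¹ / (p i - 1),
    div_ne_zero (inv_ne_zero (pow_ne_zero d (ne_zero_of_algebraicIndependent hp i)))
      (sub_ne_zero.2 (ne_one_of_algebraicIndependent hp i)),
    (hD i).mul_evalShift (ne_zero_of_algebraicIndependent hp i) d⟩

lemma actsByLinearForms_right (hp : AlgebraicIndependent F p)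
    (hD : ∀ i, IsEulerianDerivative (p i) (D i)) :
    ActsByLinearForms (fun n i => (p i ^ (n + 1))⁻¹) (fun i => MulOpposite.op (D i)) fun d =>
      (MulOpposite.opLinearEquiv k).toLinearMap ∘ₗ evalShift (fun n i => p i ^ (n - d)) d :=
  fun d i => ⟨p i ^ (d + 1) / (p i - 1),
    div_ne_zero (pow_ne_zero _ (ne_zero_of_algebraicIndependent hp i))
      (sub_ne_zero.2 (ne_one_of_algebraicIndependent hp i)),
    fun f => congrArg MulOpposite.op
      ((hD i).evalShift_mul (ne_zero_of_algebraicIndependent hp i) d f)⟩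

variable [Finite σ] [Nonempty σ]

theorem isNoetherianRing_adjoin_range (hp : AlgebraicIndependent F p)
    (hD : ∀ i, IsEulerianDerivative (p i) (D i)) :
    IsNoetherianRing (Algebra.adjoin k (Set.range D)) :=
  (actsByLinearForms_left hp hD).isNoetherianRing_adjoin (evalShift_zero_one _)
    (pow_injective_of_algebraicIndependent hp (Classical.arbitrary σ)) (criticallyDense_pow hp)

theorem isNoetherianRing_mulOpposite_adjoin_range (hp : AlgebraicIndependent F p)
    (hD : ∀ i, IsEulerianDerivative (p i) (D i)) :
    IsNoetherianRing (Algebra.adjoin k (Set.range D))ᵐᵒᵖ := by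
  have h_inj := pow_injective_of_algebraicIndependent hp (Classical.arbitrary σ)
  have h_dense : CriticallyDense fun n i => (p i ^ (n + 1))⁻¹ := fun f hf =>
    (Filter.tendsto_add_atTop_nat 1).eventually <| ((criticallyDense_pow hp).inv fun n i =>
      pow_ne_zero n (ne_zero_of_algebraicIndependent hp i)) f hf
  have h_noeth := (actsByLinearForms_right hp hD).isNoetherianRing_adjoin
    (congrArg MulOpposite.op (evalShift_zero_one _))
    (inv_injective.comp (h_inj.comp (add_left_injective 1))) h_dense
  have h_range : MulOpposite.unop ⁻¹' Set.range D = Set.range fun i => MulOpposite.op (D i) := by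
    ext x
    simp [← MulOpposite.unop_inj]
  rw [← h_range, ← Subalgebra.op_adjoin] at h_noeth
  exact isNoetherianRing_of_ringEquiv _
    (Subalgebra.mopAlgEquivOp (Algebra.adjoin k (Set.range D))).symm.toRingEquiv

end EulerianDerivatives

end NoetherianEulerian

theorem stmt_0_general {k F σ : Type*} [Field k] [CommRing F] [Algebra F k] [Finite σ] (p : σ → k)
    (hp : AlgebraicIndependent F p) (D : σ → Module.End k (LaurentPolynomial k))
    (hD : ∀ i, ∀ n : ℤ, D i (LaurentPolynomial.T n)
        = ((p i ^ n - 1) / (p i - 1)) • LaurentPolynomial.T (n - 1)) :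
    IsNoetherianRing (Algebra.adjoin k (Set.range D)) ∧
      IsNoetherianRing (↥(Algebra.adjoin k (Set.range D)))ᵐᵒᵖ := by
  obtain _ | _ := isEmpty_or_nonempty σ
  · rw [Set.range_eq_empty, Algebra.adjoin_empty]
    exact ⟨IsNoetherianRing.of_finite k _, IsNoetherianRing.of_finite k _⟩
  · exact ⟨NoetherianEulerian.isNoetherianRing_adjoin_range hp hD,
      NoetherianEulerian.isNoetherianRing_mulOpposite_adjoin_range hp hD⟩

/-- if `p₁, …, p_t` (`t ≥ 2`) are algebraically independent over the prime
subfield of the algebraically closed field `k`, then the `k`-subalgebra of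
`End_k(k[Y,Y⁻¹])` generated by the Eulerian derivatives `D_{p₁}, …, D_{p_t}` is
left and right noetherian. -/
theorem stmt_0 {k : Type*} [Field k] [IsAlgClosed k]
    (t : ℕ) (ht : 2 ≤ t) (p : Fin t → k)
    (hp : AlgebraicIndependent (⊥ : Subfield k) p)
    (D : Fin t → Module.End k (LaurentPolynomial k))
    (hD : ∀ i, ∀ n : ℤ, D i (LaurentPolynomial.T n)
        = ((p i ^ n - 1) / (p i - 1)) • LaurentPolynomial.T (n - 1)) :
    IsNoetherianRing (Algebra.adjoin k (Set.range D)) ∧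
      IsNoetherianRing (↥(Algebra.adjoin k (Set.range D)))ᵐᵒᵖ :=
  stmt_0_general p hp D hD
end
end

section
/- Let t ≥ 2 and let p_1, …, p_t ∈ k^× generate a free abelian subgroup of k^× of rank t (in particular the p_i are distinct and none equals 0 or 1). Let A be the k-subalgebra of End_k(k[Y,Y⁻¹]) generated by D_{p_1}, …, D_{p_t}. Then: (i) A is left noetherian if and only if for every nonzero homogeneous polynomial F ∈ k[x_0,…,x_t] the set {i ∈ ℕ : F(1, p_1^i, …, p_t^i) = 0} is finite; (ii) A is right noetherian if and only if for every nonzero homogeneous F the set {i ∈ ℤ : i ≤ −1 and F(1, p_1^i, …, p_t^i) = 0} is finite; (iii) A is noetherian if and only if for every nonzero homogeneous F the set {i ∈ ℤ : F(1, p_1^i, …, p_t^i) = 0} is finite. -/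
set_option synthInstance.maxHeartbeats 1000000
set_option maxHeartbeats 4000000
set_option maxSynthPendingDepth 3

noncomputable section

/-!
Let `c i = (1 : p₁ⁱ : ⋯ : p_tⁱ)`. The operator `Y ^ m ↦ φ (c m) • Y ^ (m - n)` attached to a form
`φ` of degree `n` determines `φ`, and `D_{p_j}` comes from a linear form vanishing at `c 0`. Moving
this operator past one of degree `n` translates that point to `c n`, so the part of degree `n` of
the algebra `A` is the space of forms of degree `n` vanishing at `c 0, …, c (n - 1)`, with a product
by generators that is multiplication by linear forms vanishing at `c n`.

If the points are critically dense, finitely many generators of an ideal of leading forms still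
generate in large degree, since beyond some index none of the relevant forms vanishes at `c n`.
Conversely, if a form `F` vanishes at infinitely many points, the multiples of `F` by forms
vanishing at the points `c i` with `N ≤ i < n` give an ascending chain of left ideals in `N` which
does not stabilize. In the opposite algebra the same picture holds for the points `c (-1 - i)`.
-/

namespace EulerianDerivative

open MvPolynomial

section Filtration

theorem fg_of_filtration {k A M : Type*} [CommRing k] [IsNoetherianRing k] [Ring A] [Algebra k A]
    [AddCommGroup M] [Module k M] [Module A M] [IsScalarTower k A M] {F : ℕ → Submodule k M}
    (hmono : Monotone F) (hfg : ∀ n, (F n).FG) {I : Submodule A M} (hI : ∀ x ∈ I, ∃ n, x ∈ F n)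
    {N : ℕ} (hN : ∀ n ≥ N, ∀ x ∈ I, x ∈ F (n + 1) →
      x ∈ Submodule.span A ((I : Set M) ∩ F n)) : I.FG := by
  have generated : ∀ n ≥ N, (I : Set M) ∩ F n ⊆ Submodule.span A ((I : Set M) ∩ F N) := by
    intro n hn
    induction n, hn using Nat.le_induction with
    | base => exact Submodule.subset_span
    | succ n hn ih => exact fun x hx => Submodule.span_le.2 ih (hN n hn x hx.1 hx.2)
  obtain ⟨s, hs⟩ : (I.restrictScalars k ⊓ F N).FG := (hfg N).of_le inf_le_right
  refine ⟨s, le_antisymm ?_ fun x hx => ?_⟩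
  · refine Submodule.span_le.2 fun x hx => ?_
    have : x ∈ I.restrictScalars k ⊓ F N := hs ▸ Submodule.subset_span hx
    exact this.1
  · obtain ⟨n, hn⟩ := hI x hx
    refine Submodule.span_le.2 (fun y hy => ?_)
      (generated (max n N) (le_max_right _ _) ⟨hx, hmono (le_max_left _ _) hn⟩)
    refine Submodule.span_le_restrictScalars k A (s : Set M) ?_
    rw [hs]
    exact hy

variable {k E : Type*} [CommRing k] [Ring E] [Algebra k E]

theorem isNoetherianRing_subalgebra_iff {A : Subalgebra k E} :
    IsNoetherianRing A ↔ ∀ I : Submodule A E, (∀ x ∈ I, x ∈ A) → I.FG := by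
  let ι : A →ₗ[A] E := LinearMap.toSpanSingleton A E 1
  have hι : ∀ a : A, ι a = a := fun a => mul_one (a : E)
  have hinj : Function.Injective ι := fun a b hab => Subtype.ext (by rwa [hι, hι] at hab)
  have hrange : ∀ x, x ∈ LinearMap.range ι ↔ x ∈ A := fun x =>
    ⟨by rintro ⟨a, rfl⟩; exact hι a ▸ a.2, fun hx => ⟨⟨x, hx⟩, hι _⟩⟩
  have key : IsNoetherianRing A ↔ IsNoetherian A (LinearMap.range ι) :=
    (LinearEquiv.ofInjective ι hinj).isNoetherian_iff
  rw [key, isNoetherian_submodule]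
  simp only [SetLike.le_def, hrange]

variable {G W : Submodule k E}

theorem mul_mem_of_mem_adjoin (hW : G * W ≤ W) {a w : E}
    (ha : a ∈ Algebra.adjoin k (G : Set E)) (hw : w ∈ W) : a * w ∈ W := by
  induction ha using Algebra.adjoin_induction generalizing w with
  | mem x hx => exact hW (Submodule.mul_mem_mul hx hw)
  | algebraMap r => rw [← Algebra.smul_def]; exact W.smul_mem r hw
  | add x y _ _ hx hy => rw [add_mul]; exact add_mem (hx hw) (hy hw)
  | mul x y _ _ hx hy => rw [mul_assoc]; exact hx (hy hw)

theorem toSubmodule_adjoin_eq_iSup_pow (G : Submodule k E) :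
    Subalgebra.toSubmodule (Algebra.adjoin k (G : Set E)) = ⨆ n, G ^ n := by
  refine le_antisymm (fun a ha => ?_) (iSup_le fun n => ?_)
  · have stable : G * ⨆ n, G ^ n ≤ ⨆ n, G ^ n := by
      rw [Submodule.mul_iSup]
      exact iSup_le fun n => pow_succ' G n ▸ le_iSup (G ^ ·) (n + 1)
    have one_mem : (1 : E) ∈ ⨆ n, G ^ n :=
      le_iSup (G ^ ·) 0 (pow_zero G ▸ Submodule.one_le.1 le_rfl)
    simpa using mul_mem_of_mem_adjoin stable ha one_mem
  · induction n with
    | zero => exact pow_zero G ▸ Submodule.one_le.2 (Subalgebra.one_mem _)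
    | succ n ih =>
      rw [pow_succ]
      exact Submodule.mul_le.2 fun a ha b hb =>
        Subalgebra.mul_mem _ (ih ha) (Algebra.subset_adjoin hb)

/-- The filtration of the algebra generated by `G` by word length, shifted by one so that it starts
with the zero space. -/
def powFiltration (G : Submodule k E) (n : ℕ) : Submodule k E :=
  (Finset.range n).sup (G ^ ·)

theorem powFiltration_succ (G : Submodule k E) (n : ℕ) :
    powFiltration G (n + 1) = G ^ n ⊔ powFiltration G n := by
  rw [powFiltration, Finset.range_add_one, Finset.sup_insert, powFiltration]

theorem powFiltration_mono (G : Submodule k E) : Monotone (powFiltration G) := fun _ _ h =>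
  Finset.sup_mono (Finset.range_mono h)

theorem powFiltration_fg (hG : G.FG) (n : ℕ) : (powFiltration G n).FG :=
  Submodule.fg_finset_sup _ _ fun j _ => hG.pow j

theorem mul_powFiltration_le (G : Submodule k E) (n : ℕ) :
    G * powFiltration G n ≤ powFiltration G (n + 1) := by
  induction n with
  | zero => simp [powFiltration]
  | succ n ih =>
    rw [powFiltration_succ G n, powFiltration_succ G (n + 1), Submodule.mul_sup, ← pow_succ']
    exact sup_le_sup_left ih _

theorem exists_mem_powFiltration {a : E} (ha : a ∈ Algebra.adjoin k (G : Set E)) :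
    ∃ n, a ∈ powFiltration G n := by
  rw [← Subalgebra.mem_toSubmodule, toSubmodule_adjoin_eq_iSup_pow] at ha
  have hle : ⨆ n, G ^ n ≤ ⨆ n, powFiltration G n :=
    iSup_mono' fun n => ⟨n + 1, le_sup_left.trans (powFiltration_succ G n).ge⟩
  exact (Submodule.mem_iSup_of_directed _ (powFiltration_mono G).directed_le).1 (hle ha)

/-- The elements of `G ^ n` that are the top-degree part of an element of `I`. -/
def leadingTerms (G I : Submodule k E) (n : ℕ) : Submodule k E :=
  G ^ n ⊓ (I ⊔ powFiltration G n)

theorem mul_leadingTerms_le {I : Submodule k E} (hI : G * I ≤ I) (n : ℕ) :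
    G * leadingTerms G I n ≤ leadingTerms G I (n + 1) := by
  refine le_inf ?_ ?_
  · exact pow_succ' G n ▸ mul_le_mul_right inf_le_left G
  · calc G * leadingTerms G I n ≤ G * (I ⊔ powFiltration G n) := mul_le_mul_right inf_le_right G
      _ = G * I ⊔ G * powFiltration G n := Submodule.mul_sup _ _ _
      _ ≤ I ⊔ powFiltration G (n + 1) := sup_le_sup hI (mul_powFiltration_le G n)

theorem inf_powFiltration_le {I : Submodule k E} (hI : G * I ≤ I) {n : ℕ}
    (hn : leadingTerms G I (n + 1) ≤ G * leadingTerms G I n) :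
    I ⊓ powFiltration G (n + 2)
      ≤ G * (I ⊓ powFiltration G (n + 1)) ⊔ I ⊓ powFiltration G (n + 1) := by
  set F := powFiltration G
  have hF : F n ≤ F (n + 1) := powFiltration_mono G n.le_succ
  have lift : leadingTerms G I n ≤ I ⊓ F (n + 1) ⊔ F n :=
    calc leadingTerms G I n ≤ F (n + 1) ⊓ (I ⊔ F n) :=
          inf_le_inf_right _ (le_sup_left.trans (powFiltration_succ G n).ge)
      _ = I ⊓ F (n + 1) ⊔ F n := by rw [inf_comm, sup_comm, sup_inf_assoc_of_le _ hF, sup_comm]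
  have top : I ⊓ F (n + 2) ≤ leadingTerms G I (n + 1) ⊔ F (n + 1) :=
    calc I ⊓ F (n + 2) ≤ (I ⊔ F (n + 1)) ⊓ (G ^ (n + 1) ⊔ F (n + 1)) :=
          inf_le_inf le_sup_left (powFiltration_succ G (n + 1)).le
      _ = leadingTerms G I (n + 1) ⊔ F (n + 1) := by
          rw [leadingTerms, ← inf_sup_assoc_of_le _ le_sup_right, inf_comm]
  have spread : I ⊓ F (n + 2) ≤ G * (I ⊓ F (n + 1)) ⊔ F (n + 1) :=
    calc I ⊓ F (n + 2) ≤ G * (I ⊓ F (n + 1) ⊔ F n) ⊔ F (n + 1) :=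
          top.trans (sup_le_sup_right (hn.trans (mul_le_mul_right lift G)) _)
      _ ≤ G * (I ⊓ F (n + 1)) ⊔ F (n + 1) := by
          rw [Submodule.mul_sup, sup_assoc]
          exact sup_le_sup_left (sup_le (mul_powFiltration_le G n) le_rfl) _
  calc I ⊓ F (n + 2) ≤ (G * (I ⊓ F (n + 1)) ⊔ F (n + 1)) ⊓ I := le_inf spread inf_le_left
    _ = G * (I ⊓ F (n + 1)) ⊔ I ⊓ F (n + 1) := by
        rw [sup_inf_assoc_of_le _ ((mul_le_mul_right inf_le_left G).trans hI), inf_comm]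

theorem isNoetherianRing_adjoin_of_graded [IsNoetherianRing k] (hG : G.FG)
    (h : ∀ M : ℕ → Submodule k E, (∀ n, M n ≤ G ^ n) → (∀ n, G * M n ≤ M (n + 1)) →
      ∃ N, ∀ n ≥ N, M (n + 1) ≤ G * M n) :
    IsNoetherianRing (Algebra.adjoin k (G : Set E)) := by
  refine isNoetherianRing_subalgebra_iff.2 fun I hI => ?_
  have mul_le (J : Submodule (Algebra.adjoin k (G : Set E)) E) :
      G * J.restrictScalars k ≤ J.restrictScalars k := Submodule.mul_le.2 fun a ha _ hx =>
    J.smul_mem (⟨a, Algebra.subset_adjoin ha⟩ : Algebra.adjoin k (G : Set E)) hx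
  obtain ⟨N, hN⟩ := h (leadingTerms G (I.restrictScalars k)) (fun _ => inf_le_left)
    (mul_leadingTerms_le (mul_le I))
  refine fg_of_filtration (powFiltration_mono G) (powFiltration_fg hG)
    (fun x hx => exists_mem_powFiltration (hI x hx)) (N := N + 1) fun n hn x hx hxn => ?_
  obtain ⟨m, rfl⟩ : ∃ m, n = m + 1 := ⟨n - 1, by omega⟩
  set J := Submodule.span (Algebra.adjoin k (G : Set E)) ((I : Set E) ∩ powFiltration G (m + 1))
  have subset : I.restrictScalars k ⊓ powFiltration G (m + 1) ≤ J.restrictScalars k :=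
    fun y hy => Submodule.subset_span hy
  exact sup_le ((mul_le_mul_right subset G).trans (mul_le J)) subset
    (inf_powFiltration_le (mul_le _) (hN m (by omega)) ⟨hx, hxn⟩)

theorem exists_forall_ge_eq_of_isNoetherianRing_adjoin
    (hA : IsNoetherianRing (Algebra.adjoin k (G : Set E))) (J : ℕ →o Submodule k E)
    (hJA : ∀ N, J N ≤ ⨆ n, G ^ n) (hJ : ∀ N, G * J N ≤ J N) :
    ∃ N, ∀ m ≥ N, J m = J N := by
  let I : ℕ →o Ideal (Algebra.adjoin k (G : Set E)) :=
    { toFun N :=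
        { carrier := {x | (x : E) ∈ J N}
          add_mem' := fun ha hb => (J N).add_mem ha hb
          zero_mem' := (J N).zero_mem
          smul_mem' := fun a _ hx => mul_mem_of_mem_adjoin (hJ N) a.2 hx }
      monotone' := fun _ _ h _ hx => J.monotone h hx }
  obtain ⟨N, hN⟩ := monotone_stabilizes_iff_noetherian.2 hA I
  refine ⟨N, fun m hm => (J.monotone hm).antisymm' fun x hx => ?_⟩
  have hxA : x ∈ Algebra.adjoin k (G : Set E) := by
    rw [← Subalgebra.mem_toSubmodule, toSubmodule_adjoin_eq_iSup_pow]
    exact hJA m hx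
  have : (⟨x, hxA⟩ : Algebra.adjoin k (G : Set E)) ∈ I m := hx
  rwa [← hN m hm] at this

end Filtration

section VanishingForms

variable {k σ : Type*} [Field k]

theorem homogeneousComponent_mul_of_isHomogeneous {f : MvPolynomial σ k} {n m : ℕ}
    (hf : f.IsHomogeneous n) (h : n ≤ m) (g : MvPolynomial σ k) :
    homogeneousComponent m (g * f) = homogeneousComponent (m - n) g * f := by
  let := MvPolynomial.gradedAlgebra (σ := σ) (R := k)
  have decompose_apply (φ : MvPolynomial σ k) (i : ℕ) :
      (DirectSum.decompose (homogeneousSubmodule σ k) φ i : MvPolynomial σ k)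
        = homogeneousComponent i φ := decomposition.decompose'_apply φ i
  simpa only [decompose_apply] using
    DirectSum.coe_decompose_mul_of_right_mem_of_le (homogeneousSubmodule σ k) (a := g) hf h

theorem exists_isHomogeneous_of_mem_span {ι : Type*} [Fintype ι] {f : ι → MvPolynomial σ k}
    {n : ι → ℕ} (hf : ∀ i, (f i).IsHomogeneous (n i)) {m : ℕ} (hn : ∀ i, n i ≤ m)
    {φ : MvPolynomial σ k} (hφ : φ.IsHomogeneous m) (hmem : φ ∈ Ideal.span (Set.range f)) :
    ∃ g : ι → MvPolynomial σ k, (∀ i, (g i).IsHomogeneous (m - n i)) ∧ ∑ i, g i * f i = φ := by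
  obtain ⟨g, hg⟩ := Ideal.mem_span_range_iff_exists_fun.1 hmem
  refine ⟨fun i => homogeneousComponent (m - n i) (g i),
    fun i => homogeneousComponent_isHomogeneous _ _, ?_⟩
  rw [← homogeneousComponent_eq_self hφ, ← hg, map_sum]
  exact Finset.sum_congr rfl fun i _ =>
    (homogeneousComponent_mul_of_isHomogeneous (hf i) (hn i) (g i)).symm

/-- The forms of degree `m` vanishing on the set `S` of affine points. -/
def vanishingForms (S : Set (σ → k)) (m : ℕ) : Submodule k (MvPolynomial σ k) :=
  homogeneousSubmodule σ k m ⊓ (vanishingIdeal k S).restrictScalars k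

variable {S S' : Set (σ → k)} {m m' : ℕ} {φ : MvPolynomial σ k}

theorem mem_vanishingForms :
    φ ∈ vanishingForms S m ↔ φ.IsHomogeneous m ∧ ∀ x ∈ S, eval x φ = 0 :=
  Iff.rfl

theorem mem_vanishingForms_image {α : Type*} {c : α → σ → k} {Z : Set α} :
    φ ∈ vanishingForms (c '' Z) m ↔ φ.IsHomogeneous m ∧ ∀ i ∈ Z, eval (c i) φ = 0 := by
  rw [mem_vanishingForms, Set.forall_mem_image]

theorem mem_vanishingForms_singleton {q : σ → k} :
    φ ∈ vanishingForms {q} m ↔ φ.IsHomogeneous m ∧ eval q φ = 0 := by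
  simp [mem_vanishingForms]

theorem vanishingForms_empty_zero : vanishingForms (∅ : Set (σ → k)) 0 = 1 := by
  simp [vanishingForms, homogeneousSubmodule_zero]

theorem mul_vanishingForms_le :
    vanishingForms S m * vanishingForms S' m' ≤ vanishingForms (S ∪ S') (m + m') := by
  refine Submodule.mul_le.2 fun f hf g hg => ⟨hf.1.mul hg.1, ?_⟩
  rintro x (hx | hx)
  · rw [map_mul, hf.2 x hx, zero_mul]
  · rw [map_mul, hg.2 x hx, mul_zero]

/-- The linear form `x_j - q_j x_o`, vanishing at `q` when `q_o = 1`. -/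
def linForm (q : σ → k) (o j : σ) : MvPolynomial σ k := X j - C (q j) * X o

theorem linForm_isHomogeneous (q : σ → k) (o j : σ) : (linForm q o j).IsHomogeneous 1 :=
  (isHomogeneous_X k j).sub (isHomogeneous_C_mul_X (q j) o)

theorem eval_linForm (q r : σ → k) (o j : σ) : eval r (linForm q o j) = r j - q j * r o := by
  simp [linForm]

theorem linForm_mem_vanishingForms {q : σ → k} {o : σ} (ho : q o = 1) (j : σ) :
    linForm q o j ∈ vanishingForms {q} 1 :=
  mem_vanishingForms_singleton.2 ⟨linForm_isHomogeneous q o j, by simp [eval_linForm, ho]⟩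

theorem aeval_C_mul_X_of_isHomogeneous (hφ : φ.IsHomogeneous m) (q : σ → k) (o : σ) :
    aeval (fun j => C (q j) * X o : σ → MvPolynomial σ k) φ = C (eval q φ) * X o ^ m := by
  rw [aeval_def, eval₂_eq, eval_eq, map_sum, Finset.sum_mul]
  refine Finset.sum_congr rfl fun d hd => ?_
  have degree_eq : ∑ i ∈ d.support, d i = m := by
    by_contra hne
    exact mem_support_iff.1 hd (hφ.coeff_eq_zero hne)
  simp only [mul_pow, Finset.prod_mul_distrib, Finset.prod_pow_eq_pow_sum, degree_eq,
    algebraMap_eq, map_mul, map_prod, map_pow, mul_assoc]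

theorem mem_span_linForm (hφ : φ.IsHomogeneous m) {q : σ → k} (o : σ) (h0 : eval q φ = 0) :
    φ ∈ Ideal.span (Set.range (linForm q o)) := by
  set I := Ideal.span (Set.range (linForm q o))
  have eq_comp : Ideal.Quotient.mkₐ k I = (Ideal.Quotient.mkₐ k I).comp
      (aeval fun j => C (q j) * X o) := MvPolynomial.algHom_ext fun j => by
    rw [AlgHom.comp_apply, aeval_X]
    exact Ideal.Quotient.eq.2 (Ideal.subset_span ⟨j, rfl⟩)
  refine Ideal.Quotient.eq_zero_iff_mem.1 ((DFunLike.congr_fun eq_comp φ).trans ?_)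
  rw [AlgHom.comp_apply, aeval_C_mul_X_of_isHomogeneous hφ, h0, map_zero, zero_mul, map_zero]

theorem vanishingForms_singleton_one [Finite σ] {q : σ → k} {o : σ} (ho : q o = 1) :
    vanishingForms {q} 1 = Submodule.span k (Set.range (linForm q o)) := by
  cases nonempty_fintype σ
  refine le_antisymm (fun φ hφ => ?_) (Submodule.span_le.2 ?_)
  · obtain ⟨g, hg, rfl⟩ := exists_isHomogeneous_of_mem_span (linForm_isHomogeneous q o)
      (fun _ => le_rfl) hφ.1 (mem_span_linForm hφ.1 o (hφ.2 q rfl))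
    refine Submodule.sum_mem _ fun i _ => ?_
    have hgi : g i ∈ homogeneousSubmodule σ k 0 := hg i
    rw [homogeneousSubmodule_zero] at hgi
    obtain ⟨r, hr⟩ := Submodule.mem_one.1 hgi
    rw [← hr, ← Algebra.smul_def]
    exact Submodule.smul_mem _ r (Submodule.subset_span ⟨i, rfl⟩)
  · rintro _ ⟨j, rfl⟩
    exact linForm_mem_vanishingForms ho j

variable {α : Type*} {c : α → σ → k} {o e : σ}

theorem exists_interpolation (hc : ∀ i, c i o = 1) (he : Function.Injective fun i => c i e)
    (Z : Finset α) (hm : Z.card ≤ m + 1) (v : α → k) :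
    ∃ h : MvPolynomial σ k, h.IsHomogeneous m ∧ ∀ i ∈ Z, eval (c i) h = v i := by
  classical
  let P (i : α) : MvPolynomial σ k := ∏ j ∈ Z.erase i, linForm (c j) o e
  have eval_P (x i : α) : eval (c x) (P i) = ∏ j ∈ Z.erase i, (c x e - c j e) := by
    simp [P, eval_linForm, hc]
  have P_isHomogeneous : ∀ i ∈ Z, (P i * X o ^ (m - (Z.card - 1))).IsHomogeneous m := by
    intro i hi
    have := (IsHomogeneous.prod (Z.erase i) (fun j => linForm (c j) o e) (fun _ => 1)
      fun j _ => linForm_isHomogeneous _ _ _).mul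
        (isHomogeneous_X_pow (R := k) o (m - (Z.card - 1)))
    rwa [Finset.sum_const, smul_eq_mul, mul_one, Finset.card_erase_of_mem hi,
      Nat.add_sub_of_le (by omega)] at this
  refine ⟨∑ i ∈ Z, C (v i / eval (c i) (P i)) * (P i * X o ^ (m - (Z.card - 1))),
    IsHomogeneous.sum _ _ _ fun i hi => (P_isHomogeneous i hi).C_mul _, fun i hi => ?_⟩
  rw [map_sum, Finset.sum_eq_single_of_mem i hi fun j _ hji => ?_]
  · have P_ne_zero : eval (c i) (P i) ≠ 0 := eval_P i i ▸ Finset.prod_ne_zero_iff.2 fun j hj =>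
      sub_ne_zero.2 fun h => Finset.ne_of_mem_erase hj (he h).symm
    simp [hc, div_mul_cancel₀ _ P_ne_zero]
  · have P_eq_zero : eval (c i) (P j) = 0 :=
      eval_P i j ▸ Finset.prod_eq_zero (Finset.mem_erase.2 ⟨hji.symm, hi⟩) (sub_self _)
    simp [P_eq_zero]

/- The coefficients are corrected by the syzygies `f i₀ • e i - f i • e i₀`, with multipliers
interpolating `g i / f i₀` on `Z`. -/
theorem exists_vanishing_coeffs (hc : ∀ i, c i o = 1) (he : Function.Injective fun i => c i e)
    {ι : Type*} [Fintype ι] {f : ι → MvPolynomial σ k} {n : ι → ℕ}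
    (hf : ∀ i, (f i).IsHomogeneous (n i)) (i₀ : ι) {Z : Finset α}
    (hZ : ∀ z ∈ Z, eval (c z) (f i₀) ≠ 0) (hm : ∀ i, Z.card + n i + n i₀ ≤ m + 1)
    {g : ι → MvPolynomial σ k} (hg : ∀ i, (g i).IsHomogeneous (m - n i))
    (h0 : ∀ z ∈ Z, eval (c z) (∑ i, g i * f i) = 0) :
    ∃ g' : ι → MvPolynomial σ k, (∀ i, g' i ∈ vanishingForms (c '' Z) (m - n i)) ∧
      ∑ i, g' i * f i = ∑ i, g i * f i := by
  classical
  rcases Z.eq_empty_or_nonempty with rfl | hne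
  · exact ⟨g, fun i => mem_vanishingForms_image.2 ⟨hg i, by simp⟩, rfl⟩
  have hdeg (i : ι) : n i + n i₀ ≤ m := by have := hm i; have := hne.card_pos; omega
  choose h hh hv using fun i => exists_interpolation hc he Z (m := m - n i - n i₀)
    (by have := hm i; omega) (fun z => eval (c z) (g i) / eval (c z) (f i₀))
  refine ⟨fun i => g i - h i * f i₀ + if i = i₀ then ∑ j, h j * f j else 0,
    fun i => mem_vanishingForms_image.2 ⟨((hg i).sub ?_).add ?_, fun z hz => ?_⟩, ?_⟩
  · have := (hh i).mul (hf i₀)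
    rwa [Nat.sub_add_cancel (by have := hdeg i; omega)] at this
  · split_ifs with hi
    · subst hi
      refine IsHomogeneous.sum _ _ _ fun j _ => ?_
      have := (hh j).mul (hf j)
      rwa [show m - n j - n i + n j = m - n i by have := hdeg j; omega] at this
    · exact isHomogeneous_zero _ _ _
  · have eval_syzygy : eval (c z) (∑ j, h j * f j) = 0 := by
      have hsum := h0 z hz
      simp only [map_sum, map_mul] at hsum ⊢
      simp only [hv _ z hz, div_mul_eq_mul_div, ← Finset.sum_div, hsum, zero_div]
    rw [map_add, apply_ite (eval (c z)), eval_syzygy, map_zero, ite_self, add_zero, map_sub,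
      map_mul, hv i z hz, div_mul_cancel₀ _ (hZ z hz), sub_self]
  · simp only [add_mul, sub_mul, Finset.sum_add_distrib, Finset.sum_sub_distrib, ite_mul, zero_mul,
      Finset.sum_ite_eq', Finset.mem_univ, if_true, Finset.sum_mul, mul_right_comm (h _),
      sub_add_cancel]

theorem vanishingForms_image_insert [Finite σ] (hc : ∀ i, c i o = 1)
    (he : Function.Injective fun i => c i e) {Z : Finset α} {q : α} (hq : q ∉ Z)
    (hm : Z.card ≤ m) :
    vanishingForms (c '' insert q Z) (m + 1)
      = vanishingForms {c q} 1 * vanishingForms (c '' Z) m := by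
  cases nonempty_fintype σ
  refine le_antisymm (fun φ hφ => ?_) ?_
  · obtain ⟨hφm, hφq, hφZ⟩ := by simpa [mem_vanishingForms_image] using hφ
    obtain ⟨g, hg, rfl⟩ := exists_isHomogeneous_of_mem_span (linForm_isHomogeneous (c q) o)
      (fun _ => by omega) hφm (mem_span_linForm hφm o hφq)
    have linForm_ne_zero : ∀ z ∈ Z, eval (c z) (linForm (c q) o e) ≠ 0 := fun z hz => by
      rw [eval_linForm, hc, mul_one]
      exact sub_ne_zero.2 fun h => hq (he h ▸ hz)
    obtain ⟨g', hg', hgg⟩ := exists_vanishing_coeffs hc he (linForm_isHomogeneous (c q) o) e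
      linForm_ne_zero (fun _ => by omega) hg hφZ
    rw [← hgg]
    refine Submodule.sum_mem _ fun i _ => ?_
    rw [mul_comm (g' i)]
    exact Submodule.mul_mem_mul (linForm_mem_vanishingForms (hc q) i) (hg' i)
  · rw [Set.image_insert_eq, ← Set.singleton_union, add_comm m]
    exact mul_vanishingForms_le

end VanishingForms

section CriticalDensity

variable {k σ : Type*} [Field k]

/-- The family of points `c i` of projective space is critically dense: a nonzero form vanishes at
only finitely many of them. Each point is given by a vector of homogeneous coordinates. -/
def IsCriticallyDense {α : Type*} (c : α → σ → k) : Prop :=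
  ∀ (d : ℕ) (F : MvPolynomial σ k), F ≠ 0 → F.IsHomogeneous d → {i | eval (c i) F = 0}.Finite

variable {c : ℕ → σ → k} {o e : σ} {M : ℕ → Submodule k (MvPolynomial σ k)}

theorem vanishingForms_Ico_succ [Finite σ] (hc : ∀ i, c i o = 1)
    (he : Function.Injective fun i => c i e) {a m n : ℕ} (ha : a ≤ m) (hn : m - a ≤ n) :
    vanishingForms (c '' Set.Ico a (m + 1)) (n + 1)
      = vanishingForms {c m} 1 * vanishingForms (c '' Set.Ico a m) n := by
  have := vanishingForms_image_insert hc he (Z := Finset.Ico a m) (q := m) (m := n) (by simp)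
    (by simpa using hn)
  rwa [Finset.coe_Ico, Set.insert_Ico_right_eq_Ico_add_one ha] at this

theorem vanishingForms_Iio_succ [Finite σ] (hc : ∀ i, c i o = 1)
    (he : Function.Injective fun i => c i e) (n : ℕ) :
    vanishingForms (c '' Set.Iio (n + 1)) (n + 1)
      = vanishingForms {c n} 1 * vanishingForms (c '' Set.Iio n) n := by
  simpa only [← Set.Ico_bot, Nat.bot_eq_zero] using
    vanishingForms_Ico_succ hc he n.zero_le (Nat.sub_le n 0)

theorem vanishingForms_Ico_mul_le [Finite σ] (hc : ∀ i, c i o = 1)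
    (he : Function.Injective fun i => c i e)
    (hM : ∀ m, vanishingForms {c m} 1 * M m ≤ M (m + 1)) (a j : ℕ) :
    vanishingForms (c '' Set.Ico a (a + j)) j * M a ≤ M (a + j) := by
  induction j with
  | zero => simp [vanishingForms_empty_zero]
  | succ j ih =>
    rw [← add_assoc, vanishingForms_Ico_succ hc he (by omega) (by omega), mul_assoc]
    exact (mul_le_mul_right ih _).trans (hM _)

theorem mul_mem_of_mem_vanishingForms_Ico [Finite σ] (hc : ∀ i, c i o = 1)
    (he : Function.Injective fun i => c i e)
    (hM : ∀ m, vanishingForms {c m} 1 * M m ≤ M (m + 1)) {n m : ℕ} (hnm : n ≤ m)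
    {f g : MvPolynomial σ k} (hf : f ∈ M n)
    (hg : g ∈ vanishingForms (c '' Set.Ico n (m + 1)) (m + 1 - n)) :
    g * f ∈ vanishingForms {c m} 1 * M m := by
  obtain ⟨j, rfl⟩ := Nat.exists_eq_add_of_le hnm
  rw [show n + j + 1 - n = j + 1 by omega, vanishingForms_Ico_succ hc he hnm (by omega)] at hg
  have := Submodule.mul_mem_mul hg hf
  rw [mul_assoc] at this
  exact mul_le_mul_right (vanishingForms_Ico_mul_le hc he hM n j) _ this

variable {ι : Type*} {f : ι → MvPolynomial σ k} {ν : ι → ℕ} {N m : ℕ}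

/-- Coefficient tuples of the elements of `M m` with respect to generators `f i` of degree `ν i`
that moreover vanish at the points `c j` with `N ≤ j < m`. -/
def coeffTuples [Fintype ι] (c : ℕ → σ → k) (M : ℕ → Submodule k (MvPolynomial σ k))
    (f : ι → MvPolynomial σ k) (ν : ι → ℕ) (N m : ℕ) : Submodule k (ι → MvPolynomial σ k) :=
  Submodule.pi Set.univ (fun i => vanishingForms (c '' Set.Ico N m) (m - ν i)) ⊓
    (M m).comap ((Fintype.linearCombination (MvPolynomial σ k) f).restrictScalars k)

theorem mem_coeffTuples [Fintype ι] {g : ι → MvPolynomial σ k} :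
    g ∈ coeffTuples c M f ν N m ↔
      (∀ i, g i ∈ vanishingForms (c '' Set.Ico N m) (m - ν i)) ∧ ∑ i, g i * f i ∈ M m := by
  simp [coeffTuples, Submodule.mem_pi, Fintype.linearCombination_apply]

theorem smul_mem_coeffTuples [Fintype ι]
    (hM : vanishingForms {c m} 1 * M m ≤ M (m + 1)) (hm : ∀ i, ν i ≤ m)
    {ℓ : MvPolynomial σ k} (hℓ : ℓ ∈ vanishingForms {c m} 1)
    {g : ι → MvPolynomial σ k} (hg : g ∈ coeffTuples c M f ν N m) :
    ℓ • g ∈ coeffTuples c M f ν N (m + 1) := by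
  rw [mem_coeffTuples] at hg ⊢
  refine ⟨fun i => ?_, ?_⟩
  · have := mul_vanishingForms_le (Submodule.mul_mem_mul hℓ (hg.1 i))
    rw [show 1 + (m - ν i) = m + 1 - ν i by have := hm i; omega] at this
    refine ⟨this.1, fun x hx => this.2 x ?_⟩
    obtain ⟨z, hz, rfl⟩ := hx
    rcases (Nat.lt_succ_iff.1 hz.2).eq_or_lt with rfl | hzm
    · exact Or.inl rfl
    · exact Or.inr ⟨z, ⟨hz.1, hzm⟩, rfl⟩
  · simp only [Pi.smul_apply, smul_eq_mul, mul_assoc, ← Finset.mul_sum]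
    exact hM (Submodule.mul_mem_mul hℓ hg.2)

theorem exists_mem_coeffTuples [Fintype ι] (hc : ∀ i, c i o = 1)
    (he : Function.Injective fun i => c i e) (hf : ∀ i, (f i).IsHomogeneous (ν i)) {i₀ : ι}
    (hi₀ : ∀ j ≥ N, eval (c j) (f i₀) ≠ 0) (hN : ∀ i, ν i + ν i₀ ≤ N) (hm : N ≤ m)
    (hMv : M m ≤ vanishingForms (c '' Set.Iio m) m) {φ : MvPolynomial σ k} (hφ : φ ∈ M m)
    (hspan : φ ∈ Ideal.span (Set.range f)) :
    ∃ g ∈ coeffTuples c M f ν N m, ∑ i, g i * f i = φ := by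
  obtain ⟨g, hg, rfl⟩ := exists_isHomogeneous_of_mem_span hf
    (fun i => by have := hN i; omega) (hMv hφ).1 hspan
  obtain ⟨g', hg', hgg⟩ := exists_vanishing_coeffs hc he hf i₀ (Z := Finset.Ico N m)
    (fun z hz => hi₀ z (Finset.mem_Ico.1 hz).1)
    (fun i => by have := hN i; simp only [Nat.card_Ico]; omega) hg
    (fun z hz => (hMv hφ).2 _ ⟨z, (Finset.mem_Ico.1 hz).2, rfl⟩)
  rw [Finset.coe_Ico] at hg'
  exact ⟨g', mem_coeffTuples.2 ⟨hg', hgg ▸ hφ⟩, hgg⟩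

theorem sum_mem_of_eval_eq_eval_mul [Finite σ] [Fintype ι] (hc : ∀ i, c i o = 1)
    (he : Function.Injective fun i => c i e)
    (hM : ∀ m, vanishingForms {c m} 1 * M m ≤ M (m + 1)) (hf : ∀ i, f i ∈ M (ν i))
    (hm : ∀ i, ν i ≤ m) {ℓ : MvPolynomial σ k} (hℓ : ℓ ∈ vanishingForms {c m} 1)
    {g g' : ι → MvPolynomial σ k} (hg : g ∈ coeffTuples c M f ν N (m + 1))
    (hg' : g' ∈ coeffTuples c M f ν N m)
    (heval : ∀ i, ∀ j < N, eval (c j) (g i) = eval (c j) (ℓ * g' i)) :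
    ∑ i, g i * f i ∈ vanishingForms {c m} 1 * M m := by
  have diff_mem (i : ι) : (g i - ℓ * g' i) * f i ∈ vanishingForms {c m} 1 * M m := by
    refine mul_mem_of_mem_vanishingForms_Ico hc he hM (hm i) (hf i) ?_
    have hdiff := sub_mem ((mem_coeffTuples.1 hg).1 i)
      ((mem_coeffTuples.1 (smul_mem_coeffTuples (hM m) hm hℓ hg')).1 i)
    refine mem_vanishingForms_image.2 ⟨hdiff.1, fun z hz => ?_⟩
    rcases lt_or_ge z N with hzN | hzN
    · rw [map_sub, heval i z hzN, sub_self]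
    · exact hdiff.2 _ ⟨z, ⟨hzN, hz.2⟩, rfl⟩
  have split : ∑ i, g i * f i = ∑ i, (g i - ℓ * g' i) * f i + ℓ * ∑ i, g' i * f i := by
    simp only [sub_mul, Finset.sum_sub_distrib, Finset.mul_sum, mul_assoc, sub_add_cancel]
  rw [split]
  exact add_mem (sum_mem fun i _ => diff_mem i)
    (Submodule.mul_mem_mul hℓ (mem_coeffTuples.1 hg').2)

/- Dividing the values at the first `N` points by those of `∏ ℓ z`, `N ≤ z < m`, makes the spaces
of values of `K m` an increasing sequence in a finite-dimensional space. -/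
theorem exists_forall_ge_eval_eq_eval_smul [Finite ι] {ℓ : ℕ → MvPolynomial σ k}
    (hℓ : ∀ m ≥ N, ∀ j < N, eval (c j) (ℓ m) ≠ 0) {K : ℕ → Submodule k (ι → MvPolynomial σ k)}
    (hK : ∀ m ≥ N, ∀ g ∈ K m, ℓ m • g ∈ K (m + 1)) :
    ∃ N' ≥ N, ∀ m ≥ N', ∀ g ∈ K (m + 1), ∃ g' ∈ K m, ∀ i, ∀ j < N,
      eval (c j) (g i) = eval (c j) (ℓ m * g' i) := by
  let w (r j : ℕ) : k := ∏ z ∈ Finset.Ico N (N + r), eval (c j) (ℓ z)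
  have w_ne_zero (r : ℕ) (j : Fin N) : w r j ≠ 0 := Finset.prod_ne_zero_iff.2 fun z hz =>
    hℓ z (Finset.mem_Ico.1 hz).1 j j.2
  have w_succ (r j : ℕ) : w (r + 1) j = w r j * eval (c j) (ℓ (N + r)) :=
    Finset.prod_Ico_succ_top (Nat.le_add_right N r) _
  let ev (r : ℕ) : (ι → MvPolynomial σ k) →ₗ[k] (ι → Fin N → k) :=
    LinearMap.pi fun i => LinearMap.pi fun j =>
      (w r j)⁻¹ • (aeval (c j)).toLinearMap.comp (LinearMap.proj i)
  have ev_apply (r : ℕ) (g i j) : ev r g i j = (w r j)⁻¹ * eval (c j) (g i) := by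
    simp [ev, aeval_eq_eval]
  have ev_smul (r : ℕ) (g) : ev (r + 1) (ℓ (N + r) • g) = ev r g := by
    funext i j
    rw [ev_apply, ev_apply, Pi.smul_apply, smul_eq_mul, map_mul, w_succ, mul_inv, mul_assoc,
      inv_mul_cancel_left₀ (hℓ _ (Nat.le_add_right N r) j j.2)]
  let U : ℕ →o Submodule k (ι → Fin N → k) :=
    ⟨fun r => (K (N + r)).map (ev r), monotone_nat_of_le_succ fun r => by
      rintro _ ⟨g, hg, rfl⟩
      exact ⟨_, hK _ (Nat.le_add_right N r) g hg, ev_smul r g⟩⟩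
  obtain ⟨R, hR⟩ := monotone_stabilizes_iff_noetherian.2 (inferInstance : IsNoetherian k _) U
  refine ⟨N + R, Nat.le_add_right N R, fun m hm g hg => ?_⟩
  obtain ⟨r, rfl⟩ : ∃ r, m = N + r := ⟨m - N, by omega⟩
  obtain ⟨g', hg', hgg⟩ : ev (r + 1) g ∈ U r := by
    rw [← hR r (by omega), hR (r + 1) (by omega)]
    exact ⟨g, hg, rfl⟩
  refine ⟨g', hg', fun i j hj => ?_⟩
  have := congrFun (congrFun (hgg.symm.trans (ev_smul r g').symm) i) ⟨j, hj⟩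
  rw [ev_apply, ev_apply] at this
  exact mul_left_cancel₀ (inv_ne_zero (w_ne_zero (r + 1) ⟨j, hj⟩)) this

theorem IsCriticallyDense.exists_forall_ge_eval_ne_zero (h : IsCriticallyDense c) {d : ℕ}
    {F : MvPolynomial σ k} (hF0 : F ≠ 0) (hF : F.IsHomogeneous d) :
    ∃ B, ∀ i ≥ B, eval (c i) F ≠ 0 := by
  obtain ⟨B, hB⟩ := (h d F hF0 hF).bddAbove
  exact ⟨B + 1, fun i hi hzero => by have := hB hzero; omega⟩

theorem exists_finite_generators [Finite σ] (M : ℕ → Submodule k (MvPolynomial σ k)) :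
    ∃ s : Finset (MvPolynomial σ k), (∀ f ∈ s, ∃ n, f ∈ M n) ∧
      ∀ m, ∀ φ ∈ M m, φ ∈ Ideal.span (s : Set (MvPolynomial σ k)) := by
  obtain ⟨s, hsM, hs⟩ := (Submodule.fg_span_iff_fg_span_finset_subset
    (R := MvPolynomial σ k) (⋃ m, (M m : Set (MvPolynomial σ k)))).1
    (IsNoetherian.noetherian _)
  exact ⟨s, fun f hf => by simpa using hsM hf, fun m φ hφ =>
    hs.le (Submodule.subset_span (Set.mem_iUnion.2 ⟨m, hφ⟩))⟩

theorem IsCriticallyDense.exists_forall_ge_le_mul [Finite σ] (hdense : IsCriticallyDense c)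
    (hc : ∀ i, c i o = 1) (he : Function.Injective fun i => c i e)
    (hMv : ∀ m, M m ≤ vanishingForms (c '' Set.Iio m) m)
    (hM : ∀ m, vanishingForms {c m} 1 * M m ≤ M (m + 1)) :
    ∃ N, ∀ m ≥ N, M (m + 1) ≤ vanishingForms {c m} 1 * M m := by
  obtain ⟨s, hsM, hspan⟩ := exists_finite_generators M
  by_cases hs : ∀ f ∈ s, f = 0
  · refine ⟨0, fun m _ φ hφ => ?_⟩
    have : φ = 0 := by simpa [Ideal.span_eq_bot.2 hs] using hspan _ φ hφ
    exact this ▸ zero_mem _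
  push Not at hs
  obtain ⟨F, hFs, hF0⟩ := hs
  choose ν hν using fun f : s => hsM f f.2
  obtain ⟨B, hB⟩ := hdense.exists_forall_ge_eval_ne_zero hF0 (hMv _ (hν ⟨F, hFs⟩)).1
  obtain ⟨N, hBN, hνN⟩ : ∃ N ≥ B, ∀ f, ν f + ν ⟨F, hFs⟩ ≤ N :=
    ⟨B + (Finset.univ.sup ν + ν ⟨F, hFs⟩), by omega, fun f => by
      have := Finset.le_sup (f := ν) (Finset.mem_univ f); omega⟩
  have ℓ_mem (m : ℕ) : linForm (c m) o e ∈ vanishingForms {c m} 1 :=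
    linForm_mem_vanishingForms (hc m) e
  obtain ⟨N', hN', heval⟩ := exists_forall_ge_eval_eq_eval_smul
    (c := c) (N := N) (ℓ := fun m => linForm (c m) o e)
    (K := coeffTuples c M (fun f : s => (f : MvPolynomial σ k)) ν N)
    (fun m hm j hj => by
      rw [eval_linForm, hc, mul_one]
      exact sub_ne_zero.2 fun h => by have := he h; omega)
    (fun m hm g hg => smul_mem_coeffTuples (hM m)
      (fun f => by have := hνN f; omega) (ℓ_mem m) hg)
  refine ⟨N', fun m hm φ hφ => ?_⟩
  obtain ⟨g, hg, rfl⟩ := exists_mem_coeffTuples hc he (fun f => (hMv _ (hν f)).1)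
    (fun j hj => hB j (hBN.trans hj)) hνN (by omega) (hMv _) hφ (by simpa using hspan _ _ hφ)
  obtain ⟨g', hg', hgg⟩ := heval m hm g hg
  exact sum_mem_of_eval_eq_eval_mul hc he hM hν (fun f => by have := hνN f; omega) (ℓ_mem m) hg
    hg' hgg

end CriticalDensity

section SymbolSystem

variable {k σ E : Type*} [Field k] [Ring E] [Algebra k E] {c : ℕ → σ → k} {G : Submodule k E}
  {s : ℕ → MvPolynomial σ k →ₗ[k] E} {o e : σ}

/-- A symbol calculus for the algebra generated by `G`: elements of degree `n` are represented as
`s n φ` for a unique form `φ` of degree `n`, and left multiplication by `G` becomes multiplication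
by the linear forms vanishing at `c n`. -/
structure IsSymbolSystem (c : ℕ → σ → k) (G : Submodule k E)
    (s : ℕ → MvPolynomial σ k →ₗ[k] E) : Prop where
  map_one : s 0 1 = 1
  mul_map (n : ℕ) (Y : Submodule k (MvPolynomial σ k)) :
    G * Y.map (s n) = (vanishingForms {c n} 1 * Y).map (s (n + 1))
  eq_zero_of_map_eq_zero {n : ℕ} {φ : MvPolynomial σ k} : φ.IsHomogeneous n → s n φ = 0 → φ = 0
  iSupIndep_range : iSupIndep fun n => LinearMap.range (s n)

namespace IsSymbolSystem

variable (h : IsSymbolSystem c G s)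
include h

theorem map_one_eq : (1 : Submodule k (MvPolynomial σ k)).map (s 0) = 1 := by
  rw [Submodule.one_eq_span, Submodule.map_span, Set.image_singleton, h.map_one,
    Submodule.one_eq_span]

theorem pow_eq [Finite σ] (hc : ∀ i, c i o = 1) (he : Function.Injective fun i => c i e)
    (n : ℕ) : G ^ n = (vanishingForms (c '' Set.Iio n) n).map (s n) := by
  induction n with
  | zero => simp [vanishingForms_empty_zero, h.map_one_eq]
  | succ n ih =>
    rw [pow_succ', ih, h.mul_map, vanishingForms_Iio_succ hc he]

theorem fg [Finite σ] (hc : ∀ i, c i o = 1) : G.FG := by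
  have : G = (vanishingForms {c 0} 1).map (s 1) := by
    rw [← mul_one G, ← h.map_one_eq, h.mul_map, mul_one]
  rw [this, vanishingForms_singleton_one (hc 0)]
  exact (Submodule.fg_span (Set.finite_range _)).map _

theorem mem_of_mem_iSup_map {Y : ℕ → Submodule k (MvPolynomial σ k)}
    (hY : ∀ n, Y n ≤ homogeneousSubmodule σ k n) {n : ℕ} {φ : MvPolynomial σ k}
    (hφ : φ.IsHomogeneous n) (hmem : s n φ ∈ ⨆ j, (Y j).map (s j)) : φ ∈ Y n := by
  rw [iSup_split_single _ n, Submodule.mem_sup] at hmem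
  obtain ⟨_, ⟨ψ, hψ, rfl⟩, z, hz, hsum⟩ := hmem
  have map_sub_eq : s n (φ - ψ) = z := by rw [map_sub, ← hsum, add_sub_cancel_left]
  have z_mem : z ∈ ⨆ (j) (_ : j ≠ n), LinearMap.range (s j) :=
    iSup₂_mono (fun j _ => LinearMap.map_le_range) hz
  have map_sub_zero : s n (φ - ψ) = 0 := Submodule.disjoint_def.1 (h.iSupIndep_range n) _
    ⟨_, rfl⟩ (map_sub_eq ▸ z_mem)
  rwa [sub_eq_zero.1 (h.eq_zero_of_map_eq_zero (hφ.sub (hY n hψ)) map_sub_zero)]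

theorem isNoetherianRing_adjoin [Finite σ] (hc : ∀ i, c i o = 1)
    (he : Function.Injective fun i => c i e) (hdense : IsCriticallyDense c) :
    IsNoetherianRing (Algebra.adjoin k (G : Set E)) := by
  refine isNoetherianRing_adjoin_of_graded (h.fg hc) fun M hMG hM => ?_
  let symbols (n : ℕ) := vanishingForms (c '' Set.Iio n) n ⊓ (M n).comap (s n)
  have map_symbols (n : ℕ) : (symbols n).map (s n) = M n := by
    refine (Submodule.map_le_iff_le_comap.2 inf_le_right).antisymm fun x hx => ?_
    obtain ⟨φ, hφ, rfl⟩ := h.pow_eq hc he n ▸ hMG n hx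
    exact ⟨φ, ⟨hφ, hx⟩, rfl⟩
  have mul_symbols (n : ℕ) : vanishingForms {c n} 1 * symbols n ≤ symbols (n + 1) := by
    refine le_inf ?_ (Submodule.map_le_iff_le_comap.1 ?_)
    · exact vanishingForms_Iio_succ hc he n ▸ mul_le_mul_right inf_le_left _
    · rw [← h.mul_map, map_symbols]
      exact hM n
  obtain ⟨N, hN⟩ := hdense.exists_forall_ge_le_mul hc he (fun _ => inf_le_left) mul_symbols
  refine ⟨N, fun n hn => ?_⟩
  rw [← map_symbols, ← map_symbols n, h.mul_map]
  exact Submodule.map_mono (hN n hn)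

end IsSymbolSystem

/-- The multiples `F * g` of `F` of degree `n` vanishing at the first `n` points, where `g` vanishes
at the points `c i` with `N ≤ i < n`. -/
def multiplesVanishingFrom (c : ℕ → σ → k) (F : MvPolynomial σ k) (N n : ℕ) :
    Submodule k (MvPolynomial σ k) :=
  vanishingForms (c '' Set.Iio n) n ⊓
    ((vanishingIdeal k (c '' Set.Ico N n)).restrictScalars k).map (LinearMap.mulLeft k F)

theorem mem_multiplesVanishingFrom {F φ : MvPolynomial σ k} {N n : ℕ} :
    φ ∈ multiplesVanishingFrom c F N n ↔ φ ∈ vanishingForms (c '' Set.Iio n) n ∧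
      ∃ g, (∀ i ∈ Set.Ico N n, eval (c i) g = 0) ∧ F * g = φ := by
  simp only [multiplesVanishingFrom, Submodule.mem_inf, Submodule.mem_map,
    Submodule.restrictScalars_mem, mem_vanishingIdeal_iff, Set.forall_mem_image, aeval_eq_eval,
    LinearMap.mulLeft_apply]

theorem multiplesVanishingFrom_mono (c : ℕ → σ → k) (F : MvPolynomial σ k) (n : ℕ) :
    Monotone fun N => multiplesVanishingFrom c F N n := fun N N' hN φ hφ => by
  obtain ⟨hφ, g, hg, hgφ⟩ := mem_multiplesVanishingFrom.1 hφ
  exact mem_multiplesVanishingFrom.2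
    ⟨hφ, g, fun i hi => hg i ⟨hN.trans hi.1, hi.2⟩, hgφ⟩

theorem mul_multiplesVanishingFrom_le (c : ℕ → σ → k) (F : MvPolynomial σ k) (N n : ℕ) :
    vanishingForms {c n} 1 * multiplesVanishingFrom c F N n
      ≤ multiplesVanishingFrom c F N (n + 1) := by
  refine Submodule.mul_le.2 fun ℓ hℓ φ hφ => ?_
  obtain ⟨hφ, g, hg, rfl⟩ := mem_multiplesVanishingFrom.1 hφ
  have eq_or_lt {i : ℕ} (hi : i < n + 1) : i = n ∨ i < n := by omega
  have hℓn : eval (c n) ℓ = 0 := hℓ.2 _ rfl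
  refine mem_multiplesVanishingFrom.2 ⟨mem_vanishingForms_image.2 ⟨add_comm 1 n ▸ hℓ.1.mul hφ.1,
    fun i hi => ?_⟩, ℓ * g, fun i hi => ?_, mul_left_comm _ _ _⟩
  · rw [map_mul]
    rcases eq_or_lt hi with rfl | hi
    · rw [hℓn, zero_mul]
    · rw [(mem_vanishingForms_image.1 hφ).2 i hi, mul_zero]
  · rw [map_mul]
    rcases eq_or_lt hi.2 with rfl | hin
    · rw [hℓn, zero_mul]
    · rw [hg i ⟨hi.1, hin⟩, mul_zero]

theorem exists_mem_multiplesVanishingFrom_notMem (hc : ∀ i, c i o = 1)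
    (he : Function.Injective fun i => c i e) {F : MvPolynomial σ k} {d : ℕ}
    (hF : F.IsHomogeneous d) (hF0 : F ≠ 0) (hinf : {i | eval (c i) F = 0}.Infinite) (N : ℕ) :
    ∃ z ≥ N, ∃ φ ∈ multiplesVanishingFrom c F (z + 1) (z + 1),
      φ ∉ multiplesVanishingFrom c F N (z + 1) := by
  classical
  obtain ⟨T, hTZ, hTd⟩ := hinf.exists_subset_card_eq d
  obtain ⟨z, hzZ : eval (c z) F = 0, hz⟩ := hinf.exists_gt (T.sup id + N)
  have hTz : T ⊆ Finset.range z := fun i hi => Finset.mem_range.2 <| by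
    have := Finset.le_sup (f := id) hi
    simp only [id] at this
    omega
  have hdz : d ≤ z := by simpa [hTd] using Finset.card_le_card hTz
  have hcard : (Finset.range (z + 1) \ T).card ≤ z + 1 - d + 1 := by
    rw [Finset.card_sdiff_of_subset (hTz.trans (Finset.range_mono z.le_succ)), hTd,
      Finset.card_range]
    omega
  obtain ⟨g, hg, hgv⟩ := exists_interpolation hc he _ hcard (Pi.single z 1)
  refine ⟨z, by omega, F * g, mem_multiplesVanishingFrom.2
    ⟨mem_vanishingForms_image.2 ⟨?_, fun i hi => ?_⟩, g, by simp, rfl⟩, fun hmem => ?_⟩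
  · have := hF.mul hg
    rwa [Nat.add_sub_of_le (hdz.trans z.le_succ)] at this
  · rw [map_mul]
    by_cases hiT : i ∈ T
    · rw [show eval (c i) F = 0 from hTZ hiT, zero_mul]
    · rcases eq_or_ne i z with rfl | hiz
      · rw [hzZ, zero_mul]
      · rw [hgv i (Finset.mem_sdiff.2 ⟨Finset.mem_range.2 hi, hiT⟩), Pi.single_eq_of_ne hiz,
          mul_zero]
  · obtain ⟨-, g', hg', hFg⟩ := mem_multiplesVanishingFrom.1 hmem
    have hzT : z ∉ T := fun h => Finset.notMem_range_self (hTz h)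
    have eval_g := hgv z (Finset.mem_sdiff.2 ⟨Finset.self_mem_range_succ z, hzT⟩)
    rw [Pi.single_eq_same, ← mul_left_cancel₀ hF0 hFg, hg' z ⟨by omega, by simp⟩] at eval_g
    exact zero_ne_one eval_g

namespace IsSymbolSystem

variable (h : IsSymbolSystem c G s)
include h

theorem isCriticallyDense [Finite σ] (hc : ∀ i, c i o = 1)
    (he : Function.Injective fun i => c i e)
    (hA : IsNoetherianRing (Algebra.adjoin k (G : Set E))) : IsCriticallyDense c := by
  intro d F hF0 hF
  by_contra hinf
  let J : ℕ →o Submodule k E :=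
    ⟨fun N => ⨆ n, (multiplesVanishingFrom c F N n).map (s n), fun _ _ hN =>
      iSup_mono fun n => Submodule.map_mono (multiplesVanishingFrom_mono c F n hN)⟩
  have J_le (N : ℕ) : J N ≤ ⨆ n, G ^ n :=
    iSup_mono fun n => h.pow_eq hc he n ▸ Submodule.map_mono inf_le_left
  have mul_J_le (N : ℕ) : G * J N ≤ J N := by
    refine (Submodule.mul_iSup _ _).trans_le (iSup_le fun n => ?_)
    rw [h.mul_map]
    exact (Submodule.map_mono (mul_multiplesVanishingFrom_le c F N n)).trans
      (le_iSup (fun n => (multiplesVanishingFrom c F N n).map (s n)) (n + 1))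
  obtain ⟨N, hN⟩ := exists_forall_ge_eq_of_isNoetherianRing_adjoin hA J J_le mul_J_le
  obtain ⟨z, hzN, φ, hφ, hφN⟩ :=
    exists_mem_multiplesVanishingFrom_notMem hc he hF hF0 hinf N
  refine hφN (h.mem_of_mem_iSup_map (Y := multiplesVanishingFrom c F N)
    (fun n => inf_le_left.trans inf_le_left) (mem_multiplesVanishingFrom.1 hφ).1.1 ?_)
  have : s (z + 1) φ ∈ J (z + 1) :=
    le_iSup (fun n => (multiplesVanishingFrom c F (z + 1) n).map (s n)) (z + 1) ⟨φ, hφ, rfl⟩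
  rwa [hN (z + 1) (by omega)] at this

theorem isNoetherianRing_adjoin_iff [Finite σ] (hc : ∀ i, c i o = 1)
    (he : Function.Injective fun i => c i e) :
    IsNoetherianRing (Algebra.adjoin k (G : Set E)) ↔ IsCriticallyDense c :=
  ⟨h.isCriticallyDense hc he, h.isNoetherianRing_adjoin hc he⟩

end IsSymbolSystem

end SymbolSystem

section SymbolOperators

open LaurentPolynomial (T)

variable {k σ : Type*} [Field k]

theorem end_ext_T {a b : Module.End k (LaurentPolynomial k)} (h : ∀ m : ℤ, a (T m) = b (T m)) :
    a = b :=
  (AddMonoidAlgebra.basis ℤ k).ext fun m => by simpa [AddMonoidAlgebra.basis] using h m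

/-- The operator `T m ↦ w m • T (m - n)` of degree `-n` with weights `w`. -/
def weightedShift (n : ℕ) : (ℤ → k) →ₗ[k] Module.End k (LaurentPolynomial k) where
  toFun w := (AddMonoidAlgebra.basis ℤ k).constr k fun m => w m • T (m - n)
  map_add' w w' := (AddMonoidAlgebra.basis ℤ k).ext fun m => by
    simp only [LinearMap.add_apply, Module.Basis.constr_basis, Pi.add_apply, add_smul]
  map_smul' r w := (AddMonoidAlgebra.basis ℤ k).ext fun m => by
    simp only [LinearMap.smul_apply, Module.Basis.constr_basis, Pi.smul_apply, smul_assoc,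
      RingHom.id_apply]

theorem weightedShift_T (n : ℕ) (w : ℤ → k) (m : ℤ) :
    weightedShift n w (T m) = w m • (T (m - n) : LaurentPolynomial k) :=
  (AddMonoidAlgebra.basis ℤ k).constr_basis k _ m

/-- The weights with which an operator maps `T m` to `T (m - n)`. -/
def weights (n : ℕ) : Module.End k (LaurentPolynomial k) →ₗ[k] (ℤ → k) where
  toFun a m := (a (T m)).coeff (m - n)
  map_add' a b := by ext m; simp
  map_smul' r a := by ext m; simp

theorem weights_weightedShift (n j : ℕ) (w : ℤ → k) :
    weights n (weightedShift j w) = if j = n then w else 0 := by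
  funext m
  change (weightedShift j w (T m)).coeff (m - n) = _
  rw [weightedShift_T]
  split_ifs with hj
  · subst hj; simp
  · simp [hj]

theorem weightedShift_injective (n : ℕ) : Function.Injective (weightedShift (k := k) n) :=
  Function.LeftInverse.injective (g := weights n) fun w => by
    rw [weights_weightedShift, if_pos rfl]

theorem iSupIndep_range_weightedShift :
    iSupIndep fun n => LinearMap.range (weightedShift (k := k) n) := by
  intro n
  rw [Submodule.disjoint_def]
  rintro _ ⟨w, rfl⟩ hw
  have iSup_le_ker : ⨆ (j) (_ : j ≠ n), LinearMap.range (weightedShift (k := k) j)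
      ≤ LinearMap.ker (weights n) := by
    refine iSup₂_le fun j hj => ?_
    rintro _ ⟨w, rfl⟩
    rw [LinearMap.mem_ker, weights_weightedShift, if_neg hj]
  have w_eq_zero : w = 0 := by
    simpa only [LinearMap.mem_ker, weights_weightedShift, if_true] using iSup_le_ker hw
  rw [w_eq_zero, map_zero]

/-- The weighted shift of degree `-n` whose weights are the values of a polynomial at the points of
the sequence `c`. -/
def symbolOp (c : ℤ → σ → k) (n : ℕ) :
    MvPolynomial σ k →ₗ[k] Module.End k (LaurentPolynomial k) :=
  weightedShift n ∘ₗ LinearMap.pi fun m => (aeval (c m)).toLinearMap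

theorem symbolOp_T (c : ℤ → σ → k) (n : ℕ) (φ : MvPolynomial σ k) (m : ℤ) :
    symbolOp c n φ (T m) = eval (c m) φ • (T (m - n) : LaurentPolynomial k) := by
  simp [symbolOp, weightedShift_T, aeval_eq_eval]

theorem symbolOp_zero_one (c : ℤ → σ → k) : symbolOp c 0 1 = 1 :=
  end_ext_T fun m => by simp [symbolOp_T]

theorem symbolOp_mul {c c₁ c₂ : ℤ → σ → k} {n₁ n₂ : ℕ} {φ φ₁ φ₂ : MvPolynomial σ k}
    (h : ∀ m, eval (c m) φ = eval (c₁ (m - n₂)) φ₁ * eval (c₂ m) φ₂) :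
    symbolOp c₁ n₁ φ₁ * symbolOp c₂ n₂ φ₂ = symbolOp c (n₂ + n₁) φ :=
  end_ext_T fun m => by
    rw [Module.End.mul_apply, symbolOp_T, map_smul, symbolOp_T, symbolOp_T, smul_smul, h, mul_comm,
      Nat.cast_add, sub_sub]

theorem eval_eq_zero_of_symbolOp_eq_zero {c : ℤ → σ → k} {n : ℕ} {φ : MvPolynomial σ k}
    (h : symbolOp c n φ = 0) (m : ℤ) : eval (c m) φ = 0 := by
  simpa [aeval_eq_eval] using
    congrFun (weightedShift_injective n (h.trans (map_zero (weightedShift n)).symm)) m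

theorem iSupIndep_range_symbolOp (c : ℕ → ℤ → σ → k) :
    iSupIndep fun n => LinearMap.range (symbolOp (c n) n) :=
  iSupIndep_range_weightedShift.mono fun _ => LinearMap.range_comp_le_range _ _

end SymbolOperators

section Rescaling

variable {k σ : Type*} [Field k]

/-- The substitution `X j ↦ a j • X j`. -/
def rescale (a : σ → k) : MvPolynomial σ k →ₐ[k] MvPolynomial σ k := aeval fun j => C (a j) * X j

theorem eval_rescale (a q : σ → k) (φ : MvPolynomial σ k) :
    eval q (rescale a φ) = eval (a * q) φ := by
  induction φ using MvPolynomial.induction_on with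
  | C r => simp [rescale]
  | add φ ψ hφ hψ => rw [map_add, map_add, map_add, hφ, hψ]
  | mul_X φ j hφ => rw [map_mul, map_mul, map_mul, hφ]; simp [rescale]

theorem rescale_rescale (a b : σ → k) (φ : MvPolynomial σ k) :
    rescale a (rescale b φ) = rescale (a * b) φ := by
  induction φ using MvPolynomial.induction_on with
  | C r => simp [rescale]
  | add φ ψ hφ hψ => simp only [map_add, hφ, hψ]
  | mul_X φ j hφ =>
    simp only [map_mul, hφ]
    simp only [rescale, aeval_X, map_mul, algHom_C, Pi.mul_apply, algebraMap_eq]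
    ring

theorem rescale_one (φ : MvPolynomial σ k) : rescale 1 φ = φ := by
  simp [rescale]

theorem rescale_mem_vanishingForms {a q : σ → k} {m : ℕ} {φ : MvPolynomial σ k}
    (hφ : φ ∈ vanishingForms {a * q} m) : rescale a φ ∈ vanishingForms {q} m := by
  rw [mem_vanishingForms_singleton] at hφ ⊢
  refine ⟨?_, by rw [eval_rescale, hφ.2]⟩
  simpa only [one_mul, rescale] using hφ.1.aeval _ fun j => isHomogeneous_C_mul_X (a j) j

theorem map_rescale_vanishingForms {a b : σ → k} (hab : a * b = 1) (q : σ → k) (m : ℕ) :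
    (vanishingForms {a * q} m).map (rescale a).toLinearMap = vanishingForms {q} m := by
  refine le_antisymm (Submodule.map_le_iff_le_comap.2 fun φ => rescale_mem_vanishingForms)
    fun φ hφ => ⟨rescale b φ, rescale_mem_vanishingForms ?_, ?_⟩
  · rwa [← mul_assoc, mul_comm b, hab, one_mul]
  · rw [AlgHom.toLinearMap_apply, rescale_rescale, hab, rescale_one]

theorem map_mul_map_of_forall_mul_eq {R A B : Type*} [CommSemiring R] [Semiring A] [Algebra R A]
    [Semiring B] [Algebra R B] {s₁ s₂ s₃ : A →ₗ[R] B} {τ : A →ₗ[R] A}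
    (h : ∀ g f, s₁ g * s₂ f = s₃ (τ g * f)) (X Y : Submodule R A) :
    X.map s₁ * Y.map s₂ = (X.map τ * Y).map s₃ := by
  refine le_antisymm (Submodule.mul_le.2 ?_)
    (Submodule.map_le_iff_le_comap.2 (Submodule.mul_le.2 ?_))
  · rintro _ ⟨g, hg, rfl⟩ _ ⟨f, hf, rfl⟩
    exact ⟨_, Submodule.mul_mem_mul ⟨g, hg, rfl⟩ hf, (h g f).symm⟩
  · rintro _ ⟨g, hg, rfl⟩ f hf
    rw [Submodule.mem_comap, ← h]
    exact Submodule.mul_mem_mul ⟨g, hg, rfl⟩ ⟨f, hf, rfl⟩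

end Rescaling

section GeometricSequences

variable {k σ : Type*} [Field k] {x : σ → k}

theorem zpow_add_of_ne_zero (hx : ∀ j, x j ≠ 0) (a b : ℤ) : x ^ (a + b) = x ^ a * x ^ b :=
  funext fun j => zpow_add₀ (hx j) a b

theorem zpow_mul_zpow_neg_of_ne_zero (hx : ∀ j, x j ≠ 0) (a : ℤ) : x ^ a * x ^ (-a) = 1 := by
  rw [← zpow_add_of_ne_zero hx, add_neg_cancel, zpow_zero]

theorem symbolOp_mul_symbolOp_zpow (hx : ∀ j, x j ≠ 0) (n : ℕ) (g f : MvPolynomial σ k) :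
    symbolOp (x ^ ·) 1 g * symbolOp (x ^ ·) n f
      = symbolOp (x ^ ·) (n + 1) (rescale (x ^ (-n : ℤ)) g * f) :=
  symbolOp_mul fun m => by
    rw [map_mul, eval_rescale, ← zpow_add_of_ne_zero hx, neg_add_eq_sub]

theorem symbolOp_mul_symbolOp_zpow_sub (hx : ∀ j, x j ≠ 0) (n : ℕ) (g f : MvPolynomial σ k) :
    symbolOp (fun m => x ^ (m - n)) n f * symbolOp (fun m => x ^ (m - 1)) 1 g
      = symbolOp (fun m => x ^ (m - (n + 1 : ℕ))) (n + 1) (rescale (x ^ (n : ℤ)) g * f) := by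
  rw [add_comm n]
  refine symbolOp_mul fun m => ?_
  rw [map_mul, eval_rescale, ← zpow_add_of_ne_zero hx, mul_comm]
  congr 3 <;> push_cast <;> ring_nf

theorem isSymbolSystem_zpow (hx : ∀ j, x j ≠ 0)
    (hdense : ∀ {n : ℕ} {φ : MvPolynomial σ k}, φ.IsHomogeneous n →
      (∀ m : ℤ, eval (x ^ m) φ = 0) → φ = 0) :
    IsSymbolSystem (fun i : ℕ => x ^ (i : ℤ)) ((vanishingForms {1} 1).map (symbolOp (x ^ ·) 1))
      (symbolOp (x ^ ·)) where
  map_one := symbolOp_zero_one _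
  mul_map n Y := by
    have := map_rescale_vanishingForms (zpow_mul_zpow_neg_of_ne_zero hx (-n)) (x ^ (n : ℤ)) 1
    rw [← zpow_add_of_ne_zero hx, neg_add_cancel, zpow_zero] at this
    rw [← this]
    refine map_mul_map_of_forall_mul_eq (fun g f => ?_) _ Y
    exact symbolOp_mul_symbolOp_zpow hx n g f
  eq_zero_of_map_eq_zero hφ h := hdense hφ (eval_eq_zero_of_symbolOp_eq_zero h)
  iSupIndep_range := iSupIndep_range_symbolOp fun _ => (x ^ ·)

-- The shift of the index by `n` turns right multiplication by a generator into multiplication by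
-- forms vanishing at a single point.
theorem isSymbolSystem_op_zpow (hx : ∀ j, x j ≠ 0)
    (hdense : ∀ {n : ℕ} {φ : MvPolynomial σ k}, φ.IsHomogeneous n →
      (∀ m : ℤ, eval (x ^ m) φ = 0) → φ = 0) :
    IsSymbolSystem (fun i : ℕ => x ^ (-(i + 1) : ℤ))
      ((vanishingForms {x ^ (-1 : ℤ)} 1).map
        ((MulOpposite.opLinearEquiv k).toLinearMap ∘ₗ symbolOp (fun m => x ^ (m - 1)) 1))
      fun n => (MulOpposite.opLinearEquiv k).toLinearMap ∘ₗ symbolOp (fun m => x ^ (m - n)) n where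
  map_one := congrArg MulOpposite.op (symbolOp_zero_one _)
  mul_map n Y := by
    have := map_rescale_vanishingForms (zpow_mul_zpow_neg_of_ne_zero hx n) (x ^ (-(n + 1) : ℤ)) 1
    rw [← zpow_add_of_ne_zero hx, show (n : ℤ) + -(n + 1) = -1 by ring] at this
    rw [← this]
    refine map_mul_map_of_forall_mul_eq (fun g f => MulOpposite.unop_injective ?_) _ Y
    exact symbolOp_mul_symbolOp_zpow_sub hx n g f
  eq_zero_of_map_eq_zero {n φ} hφ h := hdense hφ fun m => by
    simpa using eval_eq_zero_of_symbolOp_eq_zero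
      ((MulOpposite.opLinearEquiv k).map_eq_zero_iff.1 h) (m + n)
  iSupIndep_range := by
    simp only [LinearMap.range_comp]
    exact (iSupIndep_range_symbolOp fun (n : ℕ) (m : ℤ) => x ^ (m - n)).map_orderIso
      (Submodule.orderIsoMapComap (MulOpposite.opLinearEquiv k))

theorem eq_zero_of_forall_eval_pow_eq_zero {φ : MvPolynomial σ k}
    (hinj : Set.InjOn (fun d : σ →₀ ℕ => d.prod fun i n => x i ^ n) φ.support)
    (h : ∀ m : ℕ, eval (x ^ m) φ = 0) : φ = 0 := by
  let χ (d : φ.support) : Multiplicative ℕ →* k := powersHom k (d.1.prod fun i n => x i ^ n)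
  have χ_injective : Function.Injective χ := fun d d' hd =>
    Subtype.ext (hinj d.2 d'.2 ((powersHom k).injective hd))
  have χ_apply (d : φ.support) (m : ℕ) :
      χ d (Multiplicative.ofAdd m) = ∏ i ∈ d.1.support, (x ^ m) i ^ d.1 i := by
    simp only [χ, powersHom_apply, toAdd_ofAdd, Finsupp.prod, ← Finset.prod_pow, Pi.pow_apply,
      pow_right_comm]
  have coeff_eq_zero := Fintype.linearIndependent_iff.1
    ((linearIndependent_monoidHom (Multiplicative ℕ) k).comp χ χ_injective) (fun d => coeff d φ) <|
    funext fun m => by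
      rw [Finset.sum_apply, Pi.zero_apply, ← h m.toAdd, eval_eq, ← Finset.sum_coe_sort φ.support]
      exact Finset.sum_congr rfl fun d _ => congrArg (coeff d.1 φ * ·) (χ_apply d m.toAdd)
  refine support_eq_empty.1 (Finset.eq_empty_of_forall_notMem fun d hd => ?_)
  exact mem_support_iff.1 hd (coeff_eq_zero ⟨d, hd⟩)

end GeometricSequences

section EulerianAlgebra

open LaurentPolynomial (T)

variable {k : Type*} [Field k] {t : ℕ} {p : Fin t → k}
  {D : Fin t → Module.End k (LaurentPolynomial k)}

theorem cons_one_zpow (p : Fin t → k) (m : ℤ) :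
    (Fin.cons 1 p : Fin (t + 1) → k) ^ m = Fin.cons 1 fun j => p j ^ m :=
  funext (Fin.cases (one_zpow m) fun _ => rfl)

theorem cons_one_ne_zero (hp0 : ∀ i, p i ≠ 0) :
    ∀ j, (Fin.cons 1 p : Fin (t + 1) → k) j ≠ 0 :=
  Fin.cases one_ne_zero hp0

theorem zpow_injective_of_free (hp0 : ∀ i, p i ≠ 0)
    (hfree : ∀ m : Fin t → ℤ, ∏ i, p i ^ m i = 1 → ∀ i, m i = 0) (j : Fin t) :
    Function.Injective fun m : ℤ => p j ^ m := fun a b (hab : p j ^ a = p j ^ b) => by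
  have := hfree (Pi.single j (a - b)) (by
    rw [Finset.prod_eq_single j (fun i _ hi => by rw [Pi.single_eq_of_ne hi, zpow_zero])
      (by simp), Pi.single_eq_same, zpow_sub₀ (hp0 j), hab, div_self (zpow_ne_zero _ (hp0 j))]) j
  rwa [Pi.single_eq_same, sub_eq_zero] at this

theorem ne_one_of_free (hp0 : ∀ i, p i ≠ 0)
    (hfree : ∀ m : Fin t → ℤ, ∏ i, p i ^ m i = 1 → ∀ i, m i = 0) (j : Fin t) : p j ≠ 1 := fun h =>
  one_ne_zero (zpow_injective_of_free hp0 hfree j (a₁ := 1) (a₂ := 0) (by simp [h]))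

theorem injOn_prod_pow_of_free (hp0 : ∀ i, p i ≠ 0)
    (hfree : ∀ m : Fin t → ℤ, ∏ i, p i ^ m i = 1 → ∀ i, m i = 0) (n : ℕ) :
    Set.InjOn (fun d : Fin (t + 1) →₀ ℕ => d.prod fun i e => (Fin.cons 1 p : _ → k) i ^ e)
      {d | d.degree = n} := by
  intro d hd d' hd' hdd
  simp only [Finsupp.prod_fintype, pow_zero, implies_true, Fin.prod_univ_succ, Fin.cons_zero,
    one_pow, one_mul, Fin.cons_succ] at hdd
  have succ_eq (j : Fin t) : d j.succ = d' j.succ := by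
    have := hfree (fun j => (d j.succ : ℤ) - d' j.succ) (by
      simp only [zpow_sub₀ (hp0 _), zpow_natCast, Finset.prod_div_distrib]
      rw [hdd, div_self (Finset.prod_ne_zero_iff.2 fun j _ => pow_ne_zero _ (hp0 j))]) j
    omega
  have degree_eq : d.degree = d'.degree := hd.trans hd'.symm
  rw [Finsupp.degree_eq_sum, Finsupp.degree_eq_sum, Fin.sum_univ_succ, Fin.sum_univ_succ,
    Finset.sum_congr rfl fun j _ => succ_eq j] at degree_eq
  exact Finsupp.ext (Fin.cases (Nat.add_right_cancel degree_eq) succ_eq)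

theorem eq_zero_of_forall_eval_zpow_eq_zero (hp0 : ∀ i, p i ≠ 0)
    (hfree : ∀ m : Fin t → ℤ, ∏ i, p i ^ m i = 1 → ∀ i, m i = 0) {n : ℕ}
    {φ : MvPolynomial (Fin (t + 1)) k} (hφ : φ.IsHomogeneous n)
    (h : ∀ m : ℤ, eval ((Fin.cons 1 p : _ → k) ^ m) φ = 0) : φ = 0 := by
  refine eq_zero_of_forall_eval_pow_eq_zero ((injOn_prod_pow_of_free hp0 hfree n).mono ?_)
    fun m => by simpa only [zpow_natCast] using h m
  exact fun d hd => by_contra fun hne => mem_support_iff.1 hd (hφ.coeff_eq_zero hne)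

theorem span_range_smul {R M ι : Type*} [CommSemiring R] [AddCommMonoid M] [Module R M] {r : ι → R}
    (hr : ∀ i, IsUnit (r i)) (v : ι → M) :
    Submodule.span R (Set.range fun i => r i • v i) = Submodule.span R (Set.range v) := by
  simp only [Submodule.span_range_eq_iSup, Submodule.span_singleton_smul_eq (hr _)]

theorem span_range_eq_map_vanishingForms {E : Type*} [AddCommGroup E] [Module k E]
    {s : MvPolynomial (Fin (t + 1)) k →ₗ[k] E} {q : Fin (t + 1) → k} (hq : q 0 = 1) {r : Fin t → k}
    (hr : ∀ i, r i ≠ 0) :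
    Submodule.span k (Set.range fun i => r i • s (linForm q 0 i.succ))
      = (vanishingForms {q} 1).map s := by
  have linForm_zero : linForm q 0 0 = 0 := by simp [linForm, hq]
  rw [span_range_smul fun i => (hr i).isUnit, vanishingForms_singleton_one hq, Fin.range_fin_succ,
    linForm_zero, Submodule.span_insert_zero, Submodule.map_span, ← Set.range_comp]
  rfl

theorem span_range_eulerian (hp0 : ∀ i, p i ≠ 0)
    (hfree : ∀ m : Fin t → ℤ, ∏ i, p i ^ m i = 1 → ∀ i, m i = 0)
    (hD : ∀ i, ∀ n : ℤ, D i (T n) = ((p i ^ n - 1) / (p i - 1)) • T (n - 1)) :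
    Submodule.span k (Set.range D)
      = (vanishingForms {1} 1).map (symbolOp ((Fin.cons 1 p : Fin (t + 1) → k) ^ ·) 1) := by
  have sub_ne_zero (i) : p i - 1 ≠ 0 := sub_ne_zero.2 (ne_one_of_free hp0 hfree i)
  rw [← span_range_eq_map_vanishingForms rfl fun i => inv_ne_zero (sub_ne_zero i)]
  congr 2
  refine funext fun i => end_ext_T fun m => ?_
  rw [hD, LinearMap.smul_apply, symbolOp_T, eval_linForm, cons_one_zpow, smul_smul]
  congr 1
  simp [div_eq_inv_mul]

theorem span_range_op_eulerian (hp0 : ∀ i, p i ≠ 0)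
    (hfree : ∀ m : Fin t → ℤ, ∏ i, p i ^ m i = 1 → ∀ i, m i = 0)
    (hD : ∀ i, ∀ n : ℤ, D i (T n) = ((p i ^ n - 1) / (p i - 1)) • T (n - 1)) :
    Submodule.span k (Set.range fun i => MulOpposite.op (D i))
      = (vanishingForms {(Fin.cons 1 p : Fin (t + 1) → k) ^ (-1 : ℤ)} 1).map
        ((MulOpposite.opLinearEquiv k).toLinearMap
          ∘ₗ symbolOp (fun m => (Fin.cons 1 p : Fin (t + 1) → k) ^ (m - 1)) 1) := by
  have sub_ne_zero (i) : p i - 1 ≠ 0 := sub_ne_zero.2 (ne_one_of_free hp0 hfree i)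
  rw [← span_range_eq_map_vanishingForms (by simp) fun i => div_ne_zero (hp0 i) (sub_ne_zero i)]
  congr 2
  refine funext fun i => MulOpposite.unop_injective (end_ext_T fun m => ?_)
  change D i (T m) = (p i / (p i - 1)) • symbolOp _ 1 _ (T m)
  rw [hD, symbolOp_T, eval_linForm, cons_one_zpow, cons_one_zpow, smul_smul]
  congr 1
  have := hp0 i
  have := sub_ne_zero i
  simp only [Fin.cons_succ, Fin.cons_zero, zpow_sub₀ (hp0 i), zpow_neg, zpow_one]
  field_simp

theorem isNoetherianRing_adjoin_iff_isCriticallyDense (ht : 0 < t) (hp0 : ∀ i, p i ≠ 0)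
    (hfree : ∀ m : Fin t → ℤ, ∏ i, p i ^ m i = 1 → ∀ i, m i = 0)
    (hD : ∀ i, ∀ n : ℤ, D i (T n) = ((p i ^ n - 1) / (p i - 1)) • T (n - 1)) :
    IsNoetherianRing (Algebra.adjoin k (Set.range D)) ↔
      IsCriticallyDense fun i : ℕ => (Fin.cons 1 p : Fin (t + 1) → k) ^ (i : ℤ) := by
  rw [← Algebra.adjoin_span, span_range_eulerian hp0 hfree hD]
  exact (isSymbolSystem_zpow (cons_one_ne_zero hp0)
    (eq_zero_of_forall_eval_zpow_eq_zero hp0 hfree)).isNoetherianRing_adjoin_iff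
    (o := 0) (e := Fin.succ ⟨0, ht⟩) (fun i => one_zpow _)
    ((zpow_injective_of_free hp0 hfree ⟨0, ht⟩).comp Nat.cast_injective)

theorem isNoetherianRing_mulOpposite_adjoin_iff {R A ι : Type*} [CommSemiring R] [Semiring A]
    [Algebra R A] (a : ι → A) :
    IsNoetherianRing (Algebra.adjoin R (Set.range a))ᵐᵒᵖ ↔
      IsNoetherianRing (Algebra.adjoin R (Set.range fun i => MulOpposite.op (a i))) := by
  have range_op : Set.range (fun i => MulOpposite.op (a i)) = MulOpposite.unop ⁻¹' Set.range a :=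
    Set.ext fun x => exists_congr fun _ =>
      ⟨congrArg MulOpposite.unop, congrArg MulOpposite.op⟩
  rw [range_op, ← Subalgebra.op_adjoin]
  let e := (Subalgebra.mopAlgEquivOp (Algebra.adjoin R (Set.range a))).toRingEquiv
  exact ⟨fun _ => isNoetherianRing_of_ringEquiv _ e,
    fun _ => isNoetherianRing_of_ringEquiv _ e.symm⟩

theorem isNoetherianRing_op_adjoin_iff_isCriticallyDense (ht : 0 < t) (hp0 : ∀ i, p i ≠ 0)
    (hfree : ∀ m : Fin t → ℤ, ∏ i, p i ^ m i = 1 → ∀ i, m i = 0)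
    (hD : ∀ i, ∀ n : ℤ, D i (T n) = ((p i ^ n - 1) / (p i - 1)) • T (n - 1)) :
    IsNoetherianRing (Algebra.adjoin k (Set.range D))ᵐᵒᵖ ↔
      IsCriticallyDense fun i : ℕ => (Fin.cons 1 p : Fin (t + 1) → k) ^ (-(i + 1) : ℤ) := by
  rw [isNoetherianRing_mulOpposite_adjoin_iff, ← Algebra.adjoin_span,
    span_range_op_eulerian hp0 hfree hD]
  have neg_succ_injective : Function.Injective fun i : ℕ => (-(i + 1) : ℤ) := fun a b hab => by
    simpa using hab
  exact (isSymbolSystem_op_zpow (cons_one_ne_zero hp0)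
    (eq_zero_of_forall_eval_zpow_eq_zero hp0 hfree)).isNoetherianRing_adjoin_iff
    (o := 0) (e := Fin.succ ⟨0, ht⟩) (fun i => one_zpow _)
    ((zpow_injective_of_free hp0 hfree ⟨0, ht⟩).comp neg_succ_injective)

theorem finite_setOf_le_neg_one_iff {P : ℤ → Prop} :
    {i : ℤ | i ≤ -1 ∧ P i}.Finite ↔ {i : ℕ | P (-(i + 1))}.Finite := by
  have image_eq : {i : ℤ | i ≤ -1 ∧ P i} = (fun i : ℕ => -(i + 1 : ℤ)) '' {i | P (-(i + 1))} := by
    ext i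
    constructor
    · rintro ⟨hi, hP⟩
      have toNat_eq : -((-1 - i).toNat + 1 : ℤ) = i := by omega
      exact ⟨(-1 - i).toNat, by rwa [Set.mem_ofPred_eq, toNat_eq], toNat_eq⟩
    · rintro ⟨n, hP, rfl⟩
      exact ⟨neg_le_neg (le_add_of_nonneg_left n.cast_nonneg), hP⟩
  rw [image_eq, Set.finite_image_iff fun a _ b _ hab => by simpa using hab]

theorem finite_setOf_int_iff {P : ℤ → Prop} :
    {i : ℤ | P i}.Finite ↔ {i : ℕ | P i}.Finite ∧ {i : ℕ | P (-(i + 1))}.Finite := by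
  rw [← finite_setOf_le_neg_one_iff]
  refine ⟨fun h => ⟨h.preimage Nat.cast_injective.injOn, h.subset fun i hi => hi.2⟩, fun h =>
    ((h.1.image Nat.cast).union h.2).subset fun i hi => ?_⟩
  rcases le_or_gt 0 i with hi0 | hi0
  · exact Or.inl ⟨i.toNat, by simpa [hi0] using hi, Int.toNat_of_nonneg hi0⟩
  · exact Or.inr ⟨by omega, hi⟩

end EulerianAlgebra

end EulerianDerivative

open EulerianDerivative MvPolynomial in
theorem stmt_1_general {k : Type*} [Field k]
    (t : ℕ) (ht : 0 < t) (p : Fin t → k)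
    (hp0 : ∀ i, p i ≠ 0)
    (hfree : ∀ m : Fin t → ℤ, (∏ i, p i ^ m i) = 1 → ∀ i, m i = 0)
    (D : Fin t → Module.End k (LaurentPolynomial k))
    (hD : ∀ i, ∀ n : ℤ, D i (LaurentPolynomial.T n)
        = ((p i ^ n - 1) / (p i - 1)) • LaurentPolynomial.T (n - 1)) :
    (IsNoetherianRing (Algebra.adjoin k (Set.range D)) ↔
      ∀ (d : ℕ) (F : MvPolynomial (Fin (t + 1)) k), F ≠ 0 → F.IsHomogeneous d →
        {i : ℕ | MvPolynomial.eval (Fin.cons 1 fun j => p j ^ (i : ℤ)) F = 0}.Finite) ∧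
    (IsNoetherianRing (↥(Algebra.adjoin k (Set.range D)))ᵐᵒᵖ ↔
      ∀ (d : ℕ) (F : MvPolynomial (Fin (t + 1)) k), F ≠ 0 → F.IsHomogeneous d →
        {i : ℤ | i ≤ -1 ∧ MvPolynomial.eval (Fin.cons 1 fun j => p j ^ i) F = 0}.Finite) ∧
    ((IsNoetherianRing (Algebra.adjoin k (Set.range D)) ∧
        IsNoetherianRing (↥(Algebra.adjoin k (Set.range D)))ᵐᵒᵖ) ↔
      ∀ (d : ℕ) (F : MvPolynomial (Fin (t + 1)) k), F ≠ 0 → F.IsHomogeneous d →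
        {i : ℤ | MvPolynomial.eval (Fin.cons 1 fun j => p j ^ i) F = 0}.Finite) := by
  rw [isNoetherianRing_adjoin_iff_isCriticallyDense ht hp0 hfree hD,
    isNoetherianRing_op_adjoin_iff_isCriticallyDense ht hp0 hfree hD]
  simp only [IsCriticallyDense, cons_one_zpow, finite_setOf_le_neg_one_iff, true_and, ← forall_and]
  exact forall₄_congr fun _ F _ _ =>
    (finite_setOf_int_iff (P := fun i => eval (Fin.cons 1 fun j => p j ^ i) F = 0)).symm

/-- noetherian properties of the algebra generated by Eulerian derivatives
`D_{p₁}, …, D_{p_t}` (`p_i` generating a free abelian subgroup of `k˟` of rank `t ≥ 2`)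
are characterized by critical density of the points `(1 : p₁ⁱ : ⋯ : p_tⁱ)` of `ℙ^t`. -/
theorem stmt_1 {k : Type*} [Field k] [IsAlgClosed k]
    (t : ℕ) (ht : 2 ≤ t) (p : Fin t → k)
    (hp0 : ∀ i, p i ≠ 0)
    (hfree : ∀ m : Fin t → ℤ, (∏ i, p i ^ m i) = 1 → ∀ i, m i = 0)
    (D : Fin t → Module.End k (LaurentPolynomial k))
    (hD : ∀ i, ∀ n : ℤ, D i (LaurentPolynomial.T n)
        = ((p i ^ n - 1) / (p i - 1)) • LaurentPolynomial.T (n - 1)) :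
    (IsNoetherianRing (Algebra.adjoin k (Set.range D)) ↔
      ∀ (d : ℕ) (F : MvPolynomial (Fin (t + 1)) k), F ≠ 0 → F.IsHomogeneous d →
        {i : ℕ | MvPolynomial.eval (Fin.cons 1 fun j => p j ^ (i : ℤ)) F = 0}.Finite) ∧
    (IsNoetherianRing (↥(Algebra.adjoin k (Set.range D)))ᵐᵒᵖ ↔
      ∀ (d : ℕ) (F : MvPolynomial (Fin (t + 1)) k), F ≠ 0 → F.IsHomogeneous d →
        {i : ℤ | i ≤ -1 ∧ MvPolynomial.eval (Fin.cons 1 fun j => p j ^ i) F = 0}.Finite) ∧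
    ((IsNoetherianRing (Algebra.adjoin k (Set.range D)) ∧
        IsNoetherianRing (↥(Algebra.adjoin k (Set.range D)))ᵐᵒᵖ) ↔
      ∀ (d : ℕ) (F : MvPolynomial (Fin (t + 1)) k), F ≠ 0 → F.IsHomogeneous d →
        {i : ℤ | MvPolynomial.eval (Fin.cons 1 fun j => p j ^ i) F = 0}.Finite) :=
  stmt_1_general t (by omega) p hp0 hfree D hD
end
end
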